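/- arXiv:0708.2138 — 4 statements merged into one kernel-verified Lean document; each statement's English description precedes it below -/
import Mathlib

section
/- Let ω = Σ_{i=1}^l m_i α_i be a minuscule weight whose coefficients m_i are nonnegative rationals, I = {α ∈ S : ⟨ω, α∨⟩ = 0} and W^I = {w ∈ W : w(α) > 0 for all α ∈ I}, and let w be the unique element of W^I with w(ω) = Σ_{i=1}^l (m_i − ⌈m_i⌉) α_i (⌈·⌉ the ceiling). If σ ∈ W^I satisfies σ(nω) ≤ 0 for some positive integer n, then w ≤ σ, i.e., ℓ(σ) = ℓ(w) + ℓ(σw^{−1}). -/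
open scoped RealInnerProductSpace

/-- A finite reduced crystallographic root system `Φ` spanning a real inner product
space `V`, together with a fixed base of simple roots `α 0, …, α (l-1)`: every root is
a nonnegative or nonpositive integral combination of the simple roots.  The simple
reflections `s i` are given by the usual formula `s_α(λ) = λ − ⟨λ, α∨⟩ α`. -/
structure RootSystemWithBase (V : Type*) [NormedAddCommGroup V] [InnerProductSpace ℝ V] where
  l : ℕ
  Φ : Finset V
  α : Fin l → V
  s : Fin l → V ≃ₗ[ℝ] V
  α_mem : ∀ i, α i ∈ Φ
  root_ne_zero : ∀ β ∈ Φ, β ≠ (0 : V)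
  root_span : Submodule.span ℝ (Φ : Set V) = ⊤
  simple_indep : LinearIndependent ℝ α
  crystallographic : ∀ β ∈ Φ, ∀ γ ∈ Φ, ∃ z : ℤ, 2 * ⟪β, γ⟫ / ⟪γ, γ⟫ = (z : ℝ)
  reduced : ∀ β ∈ Φ, ∀ c : ℝ, c • β ∈ Φ → c = 1 ∨ c = -1
  base : ∀ β ∈ Φ,
    (∃ c : Fin l → ℤ, (∀ i, 0 ≤ c i) ∧ β = ∑ i, (c i : ℝ) • α i) ∨
    (∃ c : Fin l → ℤ, (∀ i, 0 ≤ c i) ∧ β = -(∑ i, (c i : ℝ) • α i))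
  s_apply : ∀ i v, s i v = v - (2 * ⟪v, α i⟫ / ⟪α i, α i⟫) • α i
  s_root : ∀ β ∈ Φ, ∀ i, s i β ∈ Φ

namespace RootSystemWithBase

variable {V : Type*} [NormedAddCommGroup V] [InnerProductSpace ℝ V]

/-- The pairing `⟨λ, β∨⟩ = 2(λ,β)/(β,β)`. -/
noncomputable def pairing (_D : RootSystemWithBase V) (lam β : V) : ℝ :=
  2 * ⟪lam, β⟫ / ⟪β, β⟫

/-- The Weyl group: the subgroup of `GL(V)` generated by the simple reflections. -/
def W (D : RootSystemWithBase V) : Subgroup (V ≃ₗ[ℝ] V) := Subgroup.closure (Set.range D.s)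

/-- The product `s_{i₁} · s_{i₂} ⋯ s_{i_k}` of simple reflections along a word. -/
def wordProd (D : RootSystemWithBase V) (L : List (Fin D.l)) : V ≃ₗ[ℝ] V := (L.map D.s).prod

/-- The length `ℓ(w)`: the least `k` such that `w` is a product of `k` simple
reflections. -/
noncomputable def len (D : RootSystemWithBase V) (w : V ≃ₗ[ℝ] V) : ℕ :=
  sInf {k | ∃ L : List (Fin D.l), L.length = k ∧ D.wordProd L = w}

/-- `v` is a linear combination of the simple roots with all coefficients `≥ 0`. -/
def IsNonnegComb (D : RootSystemWithBase V) (v : V) : Prop :=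
  ∃ c : Fin D.l → ℝ, (∀ i, 0 ≤ c i) ∧ v = ∑ i, c i • D.α i

/-- `v > 0`: a nonzero nonnegative combination of the simple roots. -/
def IsPos (D : RootSystemWithBase V) (v : V) : Prop := D.IsNonnegComb v ∧ v ≠ 0

/-- `x ≤ y` for vectors: `y − x` is a nonnegative combination of the simple roots. -/
def vle (D : RootSystemWithBase V) (x y : V) : Prop := D.IsNonnegComb (y - x)

/-- `λ` is dominant: `⟨λ, αᵢ∨⟩ ≥ 0` for all `i`. -/
def IsDominant (D : RootSystemWithBase V) (lam : V) : Prop :=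
  ∀ i, 0 ≤ D.pairing lam (D.α i)

/-- `ω` is minuscule: dominant with `⟨ω, β∨⟩ ∈ {−1, 0, 1}` for every root `β`. -/
def IsMinuscule (D : RootSystemWithBase V) (ω : V) : Prop :=
  D.IsDominant ω ∧ ∀ β ∈ D.Φ, D.pairing ω β = -1 ∨ D.pairing ω β = 0 ∨ D.pairing ω β = 1

/-- `W^I = {w ∈ W : w(α) > 0 for all α ∈ I}` where `I = {α ∈ S : ⟨ω, α∨⟩ = 0}`. -/
def WI (D : RootSystemWithBase V) (ω : V) : Set (V ≃ₗ[ℝ] V) :=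
  {w | w ∈ D.W ∧ ∀ i, D.pairing ω (D.α i) = 0 → D.IsPos (w (D.α i))}

/-- `w ≤ τ` in `W`:  `ℓ(τ) = ℓ(w) + ℓ(τ w⁻¹)`. -/
def wle (D : RootSystemWithBase V) (w τ : V ≃ₗ[ℝ] V) : Prop :=
  D.len τ = D.len w + D.len (τ * w⁻¹)

end RootSystemWithBase

/-!
Write `ht` for the sum of the coordinates in the basis of simple roots. For a minuscule `ω`, each
simple reflection changes the height of a point of the orbit `W ω` by at most one. Conversely, if
`w, σ ∈ W^I` and `v = w ω - σ ω ≥ 0` is nonzero, then `(v, v) > 0` yields a simple root `α` in the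
support of `v` with `⟨σ ω, α∨⟩ < ⟨w ω, α∨⟩`. Both pairings lie in `{-1, 0, 1}`, so either
`s_α w ω = w ω - α` or `s_α σ ω = σ ω + α`, and `v` can be shrunk one simple root at a time. Hence
`ℓ(w) = ht (ω - w ω)` on `W^I`, and `σ ω ≤ w ω` implies `w ≤ σ`. Finally, the coordinates of `σ ω`
are congruent to those of `ω` modulo `ℤ`, so `σ ω ≤ 0` forces `σ ω ≤ ∑ (m i - ⌈m i⌉) α i`.
-/

namespace RootSystemWithBase

variable {V : Type*} [NormedAddCommGroup V] [InnerProductSpace ℝ V] {D : RootSystemWithBase V}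
  {u v β lam ω : V} {g h w σ : V ≃ₗ[ℝ] V}

/-! ### Coordinates in the simple roots -/

theorem span_range_α (D : RootSystemWithBase V) : Submodule.span ℝ (Set.range D.α) = ⊤ := by
  have sum_mem (c : Fin D.l → ℤ) :
      ∑ i, (c i : ℝ) • D.α i ∈ Submodule.span ℝ (Set.range D.α) :=
    Submodule.sum_mem _ fun i _ => Submodule.smul_mem _ _ (Submodule.subset_span ⟨i, rfl⟩)
  rw [eq_top_iff, ← D.root_span, Submodule.span_le]
  intro β hβ
  rcases D.base β hβ with ⟨c, -, rfl⟩ | ⟨c, -, rfl⟩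
  · exact sum_mem c
  · exact Submodule.neg_mem _ (sum_mem c)

/-- The simple roots as a basis of `V`. -/
noncomputable def simpleBasis (D : RootSystemWithBase V) : Module.Basis (Fin D.l) ℝ V :=
  Module.Basis.mk D.simple_indep D.span_range_α.ge

/-- The coefficient of a vector at the `i`-th simple root. -/
noncomputable def coeff (D : RootSystemWithBase V) (i : Fin D.l) : V →ₗ[ℝ] ℝ :=
  D.simpleBasis.coord i

/-- The height of a vector: the sum of its coefficients at the simple roots. -/
noncomputable def height (D : RootSystemWithBase V) : V →ₗ[ℝ] ℝ := ∑ i, D.coeff i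

/-- The root lattice `ℤΦ`, as the `ℤ`-span of the simple roots. -/
def rootLattice (D : RootSystemWithBase V) : Submodule ℤ V :=
  Submodule.span ℤ (Set.range D.α)

theorem coe_simpleBasis (D : RootSystemWithBase V) : ⇑D.simpleBasis = D.α :=
  Module.Basis.coe_mk _ _

theorem sum_coeff_smul (v : V) : ∑ i, D.coeff i v • D.α i = v := by
  rw [← coe_simpleBasis]
  exact D.simpleBasis.sum_repr v

theorem coeff_sum_smul (c : Fin D.l → ℝ) (j : Fin D.l) :
    D.coeff j (∑ i, c i • D.α i) = c j := by
  rw [← coe_simpleBasis]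
  exact congr_fun (D.simpleBasis.repr_sum_self c) j

theorem coeff_α (i j : Fin D.l) : D.coeff j (D.α i) = if i = j then 1 else 0 := by
  rw [← coe_simpleBasis, coeff, Module.Basis.coord_apply, D.simpleBasis.repr_self_apply]

theorem height_apply (v : V) : D.height v = ∑ i, D.coeff i v := by
  rw [height, LinearMap.sum_apply]

theorem height_α (i : Fin D.l) : D.height (D.α i) = 1 := by
  simp only [height_apply, coeff_α, Finset.sum_ite_eq, Finset.mem_univ, if_true]

theorem α_mem_rootLattice (i : Fin D.l) : D.α i ∈ D.rootLattice :=
  Submodule.subset_span ⟨i, rfl⟩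

theorem exists_int_coeff_eq (hv : v ∈ D.rootLattice) (i : Fin D.l) :
    ∃ z : ℤ, D.coeff i v = z := by
  rw [rootLattice, ← coe_simpleBasis, Module.Basis.mem_span_iff_repr_mem] at hv
  obtain ⟨z, hz⟩ := hv i
  exact ⟨z, hz.symm⟩

/-! ### The positive cone -/

theorem isNonnegComb_iff : D.IsNonnegComb v ↔ ∀ i, 0 ≤ D.coeff i v := by
  constructor
  · rintro ⟨c, hc, rfl⟩ i
    rw [coeff_sum_smul]
    exact hc i
  · exact fun hv => ⟨fun i => D.coeff i v, hv, (sum_coeff_smul v).symm⟩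

theorem vle_iff : D.vle u v ↔ ∀ i, D.coeff i u ≤ D.coeff i v := by
  simp only [vle, isNonnegComb_iff, map_sub, sub_nonneg]

theorem vle_zero_of_smul {c : ℝ} (hc : 0 < c) (hv : D.vle (c • v) 0) : D.vle v 0 :=
  vle_iff.mpr fun i => by
    have hi := vle_iff.mp hv i
    rw [map_smul, map_zero, smul_eq_mul] at hi
    rw [map_zero]
    exact nonpos_of_mul_nonpos_right hi hc

theorem isNonnegComb_zero : D.IsNonnegComb 0 :=
  isNonnegComb_iff.mpr fun i => by rw [map_zero]

theorem isNonnegComb_α (i : Fin D.l) : D.IsNonnegComb (D.α i) :=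
  isNonnegComb_iff.mpr fun j => by rw [coeff_α]; split_ifs <;> norm_num

namespace IsNonnegComb

theorem add (hu : D.IsNonnegComb u) (hv : D.IsNonnegComb v) : D.IsNonnegComb (u + v) :=
  isNonnegComb_iff.mpr fun i => by
    rw [map_add]
    exact add_nonneg (isNonnegComb_iff.mp hu i) (isNonnegComb_iff.mp hv i)

theorem smul {c : ℝ} (hc : 0 ≤ c) (hv : D.IsNonnegComb v) : D.IsNonnegComb (c • v) :=
  isNonnegComb_iff.mpr fun i => by
    rw [map_smul]
    exact smul_nonneg hc (isNonnegComb_iff.mp hv i)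

theorem sum {ι : Type*} {s : Finset ι} {f : ι → V} (hf : ∀ i ∈ s, D.IsNonnegComb (f i)) :
    D.IsNonnegComb (∑ i ∈ s, f i) :=
  Finset.sum_induction f D.IsNonnegComb (fun _ _ => add) isNonnegComb_zero hf

theorem height_nonneg (hv : D.IsNonnegComb v) : 0 ≤ D.height v := by
  rw [height_apply]
  exact Finset.sum_nonneg fun i _ => isNonnegComb_iff.mp hv i

theorem height_eq_zero_iff (hv : D.IsNonnegComb v) : D.height v = 0 ↔ v = 0 := by
  refine ⟨fun h0 => ?_, fun h0 => by rw [h0, map_zero]⟩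
  rw [height_apply, Finset.sum_eq_zero_iff_of_nonneg fun i _ => isNonnegComb_iff.mp hv i] at h0
  rw [← D.sum_coeff_smul v]
  exact Finset.sum_eq_zero fun i hi => by rw [h0 i hi, zero_smul]

theorem eq_zero_of_neg (hv : D.IsNonnegComb v) (hv' : D.IsNonnegComb (-v)) : v = 0 := by
  refine hv.height_eq_zero_iff.mp (le_antisymm ?_ hv.height_nonneg)
  simpa only [map_neg, Left.nonneg_neg_iff] using hv'.height_nonneg

theorem sub_α {i : Fin D.l} (hv : D.IsNonnegComb v) (hi : 1 ≤ D.coeff i v) :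
    D.IsNonnegComb (v - D.α i) := by
  refine isNonnegComb_iff.mpr fun j => ?_
  rw [map_sub, coeff_α]
  split_ifs with hij
  · rwa [← hij, sub_nonneg]
  · rw [sub_zero]
    exact isNonnegComb_iff.mp hv j

end IsNonnegComb

theorem isNonnegComb_or_neg (hβ : β ∈ D.Φ) : D.IsNonnegComb β ∨ D.IsNonnegComb (-β) := by
  rcases D.base β hβ with ⟨c, hc, rfl⟩ | ⟨c, hc, rfl⟩
  · exact .inl ⟨fun i => c i, fun i => Int.cast_nonneg (hc i), rfl⟩
  · exact .inr ⟨fun i => c i, fun i => Int.cast_nonneg (hc i), neg_neg _⟩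

theorem not_isNonnegComb_iff (hβ : β ∈ D.Φ) : ¬ D.IsNonnegComb β ↔ D.IsNonnegComb (-β) :=
  ⟨(isNonnegComb_or_neg hβ).resolve_left,
    fun hneg hpos => D.root_ne_zero β hβ (hpos.eq_zero_of_neg hneg)⟩

theorem IsNonnegComb.exists_nat_height_eq (hv : D.IsNonnegComb v) (hlat : v ∈ D.rootLattice) :
    ∃ N : ℕ, D.height v = N := by
  choose z hz using exists_int_coeff_eq hlat
  have hheight : D.height v = (∑ i, z i : ℤ) := by
    rw [height_apply, Int.cast_sum]
    exact Finset.sum_congr rfl fun i _ => hz i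
  have hnonneg : 0 ≤ ∑ i, z i := by exact_mod_cast hheight ▸ hv.height_nonneg
  lift ∑ i, z i to ℕ using hnonneg with N
  exact ⟨N, hheight⟩

/-! ### The pairing and simple reflections -/

theorem pairing_sub_left (D : RootSystemWithBase V) (u v β : V) :
    D.pairing (u - v) β = D.pairing u β - D.pairing v β := by
  simp only [pairing, inner_sub_left]
  ring

theorem pairing_eq_zero_iff (hβ : β ≠ 0) : D.pairing lam β = 0 ↔ ⟪lam, β⟫ = 0 := by
  simp [pairing, hβ]

theorem pairing_nonneg_iff (hβ : β ≠ 0) : 0 ≤ D.pairing lam β ↔ 0 ≤ ⟪lam, β⟫ := by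
  have := real_inner_self_pos.mpr hβ
  rw [pairing, le_div_iff₀ this, zero_mul, mul_nonneg_iff_of_pos_left two_pos]

theorem pairing_pos_iff (hβ : β ≠ 0) : 0 < D.pairing lam β ↔ 0 < ⟪lam, β⟫ := by
  have := real_inner_self_pos.mpr hβ
  rw [pairing, lt_div_iff₀ this, zero_mul, mul_pos_iff_of_pos_left two_pos]

theorem α_ne_zero (i : Fin D.l) : D.α i ≠ 0 := D.root_ne_zero _ (D.α_mem i)

theorem s_apply_eq_sub_pairing (i : Fin D.l) (v : V) :
    D.s i v = v - D.pairing v (D.α i) • D.α i := D.s_apply i v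

theorem s_apply_eq_reflection (i : Fin D.l) (v : V) :
    D.s i v = (ℝ ∙ D.α i)ᗮ.reflection v := by
  rw [Submodule.reflection_orthogonal_apply, Submodule.reflection_singleton_apply, D.s_apply,
    real_inner_self_eq_norm_sq, real_inner_comm]
  module

theorem s_apply_α (i : Fin D.l) : D.s i (D.α i) = -D.α i := by
  rw [s_apply_eq_reflection, Submodule.reflection_orthogonalComplement_singleton_eq_neg]

theorem s_mul_s (i : Fin D.l) : D.s i * D.s i = 1 := by
  ext v
  simp [s_apply_eq_reflection]

theorem inv_s (i : Fin D.l) : (D.s i)⁻¹ = D.s i := inv_eq_of_mul_eq_one_left (s_mul_s i)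

theorem s_mul_s_mul (i : Fin D.l) (g : V ≃ₗ[ℝ] V) : D.s i * (D.s i * g) = g := by
  rw [← mul_assoc, s_mul_s, one_mul]

theorem mul_s_mul_s (g : V ≃ₗ[ℝ] V) (i : Fin D.l) : g * D.s i * D.s i = g := by
  rw [mul_assoc, s_mul_s, mul_one]

theorem inner_s_apply (i : Fin D.l) (u v : V) : ⟪D.s i u, D.s i v⟫ = ⟪u, v⟫ := by
  simp only [s_apply_eq_reflection, LinearIsometryEquiv.inner_map_map]

theorem coeff_s_apply_of_ne {i j : Fin D.l} (hij : i ≠ j) (v : V) :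
    D.coeff j (D.s i v) = D.coeff j v := by
  rw [s_apply_eq_sub_pairing, map_sub, map_smul, coeff_α, if_neg hij, smul_zero, sub_zero]

/-- A simple reflection changes only one coordinate, so all other coordinates of `β` vanish. -/
theorem eq_α_of_not_isNonnegComb_s_apply (hβ : β ∈ D.Φ) (hpos : D.IsNonnegComb β) {i : Fin D.l}
    (hs : ¬ D.IsNonnegComb (D.s i β)) : β = D.α i := by
  rw [not_isNonnegComb_iff (D.s_root β hβ i), isNonnegComb_iff] at hs
  have coeff_eq_zero (j) (hj : j ≠ i) : D.coeff j β = 0 := by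
    have hle := hs j
    rw [map_neg, coeff_s_apply_of_ne hj.symm, Left.nonneg_neg_iff] at hle
    exact le_antisymm hle (isNonnegComb_iff.mp hpos j)
  have hβi : β = D.coeff i β • D.α i := by
    conv_lhs => rw [← D.sum_coeff_smul β]
    exact Finset.sum_eq_single i (fun j _ hj => by rw [coeff_eq_zero j hj, zero_smul]) (by simp)
  rcases D.reduced _ (D.α_mem i) (D.coeff i β) (hβi ▸ hβ) with hc | hc
  · rw [hβi, hc, one_smul]
  · have := isNonnegComb_iff.mp hpos i
    norm_num [hc] at this

/-! ### The Weyl group -/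

theorem s_mem_W (i : Fin D.l) : D.s i ∈ D.W := Subgroup.subset_closure ⟨i, rfl⟩

theorem W_induction {p : (V ≃ₗ[ℝ] V) → Prop} (one : p 1)
    (s_mul : ∀ i g, g ∈ D.W → p g → p (D.s i * g)) (hg : g ∈ D.W) : p g := by
  induction hg using Subgroup.closure_induction_left with
  | one => exact one
  | mul_left _ hs g hg ih =>
    obtain ⟨i, rfl⟩ := hs
    exact s_mul i g hg ih
  | inv_mul_cancel _ hs g hg ih =>
    obtain ⟨i, rfl⟩ := hs
    exact inv_s i ▸ s_mul i g hg ih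

theorem inner_W_apply (hg : g ∈ D.W) (u v : V) : ⟪g u, g v⟫ = ⟪u, v⟫ :=
  W_induction (p := fun g => ⟪g u, g v⟫ = ⟪u, v⟫) rfl
    (fun i g _ ih => (inner_s_apply i (g u) (g v)).trans ih) hg

theorem W_apply_mem_Φ (hg : g ∈ D.W) (hβ : β ∈ D.Φ) : g β ∈ D.Φ :=
  W_induction (p := fun g => g β ∈ D.Φ) hβ (fun i g _ ih => D.s_root (g β) ih i) hg

theorem pairing_W_apply (hg : g ∈ D.W) (u v : V) : D.pairing (g u) (g v) = D.pairing u v := by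
  simp only [pairing, inner_W_apply hg]

theorem pairing_W_apply_left (hg : g ∈ D.W) (u v : V) :
    D.pairing (g u) v = D.pairing u (g⁻¹ v) := by
  rw [← pairing_W_apply hg u, ← LinearEquiv.mul_apply g, mul_inv_cancel, LinearEquiv.coe_one, id]

theorem mul_s_eq_s_mul (hg : g ∈ D.W) {i k : Fin D.l} (hik : g (D.α k) = D.α i) :
    g * D.s k = D.s i * g := by
  ext v
  simp only [LinearEquiv.mul_apply, s_apply_eq_sub_pairing, map_sub, map_smul]
  rw [← hik, pairing_W_apply hg]

/-! ### Length and right descents -/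

theorem wordProd_cons (i : Fin D.l) (L : List (Fin D.l)) :
    D.wordProd (i :: L) = D.s i * D.wordProd L := by
  simp [wordProd]

theorem wordProd_append (L M : List (Fin D.l)) :
    D.wordProd (L ++ M) = D.wordProd L * D.wordProd M := by
  simp [wordProd]

theorem wordProd_singleton (i : Fin D.l) : D.wordProd [i] = D.s i := by
  simp [wordProd]

theorem wordProd_mem_W (L : List (Fin D.l)) : D.wordProd L ∈ D.W :=
  Subgroup.list_prod_mem _ fun _ hx => by
    obtain ⟨i, -, rfl⟩ := List.mem_map.mp hx
    exact s_mem_W i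

theorem len_wordProd_le (L : List (Fin D.l)) : D.len (D.wordProd L) ≤ L.length :=
  Nat.sInf_le ⟨L, rfl, rfl⟩

theorem exists_reduced_word (hg : g ∈ D.W) :
    ∃ L : List (Fin D.l), L.length = D.len g ∧ D.wordProd L = g := by
  have exists_word : ∃ L : List (Fin D.l), D.wordProd L = g :=
    W_induction (p := fun g => ∃ L : List (Fin D.l), D.wordProd L = g) ⟨[], rfl⟩
      (fun i _ _ ⟨L, hL⟩ => ⟨i :: L, by rw [wordProd_cons, hL]⟩) hg
  obtain ⟨L, hL⟩ := exists_word
  exact Nat.sInf_mem (s := {k | ∃ L : List (Fin D.l), L.length = k ∧ D.wordProd L = g})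
    ⟨_, L, rfl, hL⟩

theorem len_one (D : RootSystemWithBase V) : D.len 1 = 0 :=
  Nat.le_zero.mp (len_wordProd_le (D := D) [])

theorem len_s_le (i : Fin D.l) : D.len (D.s i) ≤ 1 := by
  rw [← wordProd_singleton]
  exact len_wordProd_le [i]

theorem len_mul_le (hg : g ∈ D.W) (hh : h ∈ D.W) : D.len (g * h) ≤ D.len g + D.len h := by
  obtain ⟨L, hL, rfl⟩ := exists_reduced_word hg
  obtain ⟨M, hM, rfl⟩ := exists_reduced_word hh
  rw [← hL, ← hM, ← wordProd_append, ← List.length_append]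
  exact len_wordProd_le _

/-- The exchange condition: along the word, the letter that first turns `α k` negative can be
deleted. -/
theorem exists_wordProd_eq_mul_s {L : List (Fin D.l)} {k : Fin D.l}
    (hk : ¬ D.IsNonnegComb (D.wordProd L (D.α k))) :
    ∃ M : List (Fin D.l), M.length + 1 = L.length ∧ D.wordProd M = D.wordProd L * D.s k := by
  induction L with
  | nil => exact absurd (isNonnegComb_α k) hk
  | cons i L ih =>
    by_cases hL : D.IsNonnegComb (D.wordProd L (D.α k))
    · have hroot := W_apply_mem_Φ (wordProd_mem_W L) (D.α_mem k)
      rw [wordProd_cons, LinearEquiv.mul_apply] at hk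
      refine ⟨L, rfl, ?_⟩
      rw [wordProd_cons, mul_assoc, mul_s_eq_s_mul (wordProd_mem_W L)
        (eq_α_of_not_isNonnegComb_s_apply hroot hL hk), s_mul_s_mul]
    · obtain ⟨M, hlen, hM⟩ := ih hL
      exact ⟨i :: M, by rw [List.length_cons, List.length_cons, hlen],
        by rw [wordProd_cons, wordProd_cons, hM, mul_assoc]⟩

theorem len_mul_s_lt_of_not_isNonnegComb (hg : g ∈ D.W) {k : Fin D.l}
    (hk : ¬ D.IsNonnegComb (g (D.α k))) : D.len (g * D.s k) < D.len g := by
  obtain ⟨L, hL, rfl⟩ := exists_reduced_word hg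
  obtain ⟨M, hlen, hM⟩ := exists_wordProd_eq_mul_s hk
  rw [← hM]
  have := len_wordProd_le M
  omega

theorem len_mul_s_lt_iff (hg : g ∈ D.W) (k : Fin D.l) :
    D.len (g * D.s k) < D.len g ↔ ¬ D.IsNonnegComb (g (D.α k)) := by
  refine ⟨fun hlt hpos => ?_, len_mul_s_lt_of_not_isNonnegComb hg⟩
  have hgs : g * D.s k ∈ D.W := D.W.mul_mem hg (s_mem_W k)
  have hneg : ¬ D.IsNonnegComb ((g * D.s k) (D.α k)) := by
    rw [not_isNonnegComb_iff (W_apply_mem_Φ hgs (D.α_mem k)), LinearEquiv.mul_apply, s_apply_α,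
      map_neg, neg_neg]
    exact hpos
  have := len_mul_s_lt_of_not_isNonnegComb hgs hneg
  rw [mul_s_mul_s] at this
  exact lt_asymm hlt this

theorem exists_len_mul_s_lt (hg : g ∈ D.W) (hg1 : g ≠ 1) : ∃ k, D.len (g * D.s k) < D.len g := by
  obtain ⟨L, hL, rfl⟩ := exists_reduced_word hg
  rcases List.eq_nil_or_concat' L with rfl | ⟨L, k, rfl⟩
  · exact absurd rfl hg1
  · refine ⟨k, ?_⟩
    rw [← hL, wordProd_append, wordProd_singleton, mul_s_mul_s, List.length_append]
    exact Nat.lt_succ_of_le (len_wordProd_le L)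

theorem eq_one_of_forall_isNonnegComb (hg : g ∈ D.W) (hpos : ∀ i, D.IsNonnegComb (g (D.α i))) :
    g = 1 := by
  by_contra hg1
  obtain ⟨k, hk⟩ := exists_len_mul_s_lt hg hg1
  exact (len_mul_s_lt_iff hg k).mp hk (hpos k)

/-! ### Orbits of dominant weights -/

theorem IsDominant.inner_nonneg (hω : D.IsDominant ω) (hv : D.IsNonnegComb v) : 0 ≤ ⟪ω, v⟫ := by
  obtain ⟨c, hc, rfl⟩ := hv
  rw [inner_sum]
  refine Finset.sum_nonneg fun i _ => ?_
  rw [real_inner_smul_right]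
  exact mul_nonneg (hc i) ((pairing_nonneg_iff (α_ne_zero i)).mp (hω i))

theorem IsDominant.vle_W_apply (hω : D.IsDominant ω) (hg : g ∈ D.W) : D.vle (g ω) ω := by
  induction hlen : D.len g using Nat.strong_induction_on generalizing g with
  | _ N ih =>
    rcases eq_or_ne g 1 with rfl | hg1
    · simpa [vle] using D.isNonnegComb_zero
    obtain ⟨k, hk⟩ := exists_len_mul_s_lt hg hg1
    have hneg : D.IsNonnegComb (-g (D.α k)) :=
      (not_isNonnegComb_iff (W_apply_mem_Φ hg (D.α_mem k))).mp ((len_mul_s_lt_iff hg k).mp hk)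
    have hle : D.vle ((g * D.s k) ω) ω := ih _ (hlen ▸ hk) (D.W.mul_mem hg (s_mem_W k)) rfl
    have hsplit : ω - g ω =
        ω - (g * D.s k) ω + D.pairing ω (D.α k) • -g (D.α k) := by
      rw [LinearEquiv.mul_apply, s_apply_eq_sub_pairing, map_sub, map_smul]
      module
    rw [vle, hsplit]
    exact hle.add (hneg.smul (hω k))

theorem isNonnegComb_apply_of_mem_WI (hω : D.IsDominant ω) (hw : w ∈ D.WI ω)
    (hv : D.IsNonnegComb v) (hωv : ⟪ω, v⟫ = 0) : D.IsNonnegComb (w v) := by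
  obtain ⟨c, hc, rfl⟩ := hv
  have term_eq_zero : ∀ i ∈ Finset.univ, ⟪ω, c i • D.α i⟫ = 0 := by
    rw [inner_sum] at hωv
    exact (Finset.sum_eq_zero_iff_of_nonneg
      fun i _ => hω.inner_nonneg ((isNonnegComb_α i).smul (hc i))).mp hωv
  rw [map_sum]
  refine .sum fun i hi => ?_
  rw [map_smul]
  rcases mul_eq_zero.mp ((real_inner_smul_right _ _ _).symm.trans (term_eq_zero i hi)) with h0 | h0
  · rw [h0, zero_smul]
    exact isNonnegComb_zero
  · exact .smul (hc i) (hw.2 i ((pairing_eq_zero_iff (α_ne_zero i)).mpr h0)).1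

theorem IsDominant.injOn_WI (hω : D.IsDominant ω) :
    Set.InjOn (fun g : V ≃ₗ[ℝ] V => g ω) (D.WI ω) := by
  intro σ hσ w hw (hσw : σ ω = w ω)
  have hg : w⁻¹ * σ ∈ D.W := D.W.mul_mem (D.W.inv_mem hw.1) hσ.1
  have w_apply (v : V) : w ((w⁻¹ * σ) v) = σ v := by
    rw [← LinearEquiv.mul_apply, mul_inv_cancel_left]
  have hfix : (w⁻¹ * σ) ω = ω := w.injective ((w_apply ω).trans hσw)
  refine (inv_mul_eq_one.mp (eq_one_of_forall_isNonnegComb hg fun i => ?_)).symm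
  by_contra hnot
  have hneg := (not_isNonnegComb_iff (W_apply_mem_Φ hg (D.α_mem i))).mp hnot
  have hinner : ⟪ω, -(w⁻¹ * σ) (D.α i)⟫ = -⟪ω, D.α i⟫ := by
    rw [inner_neg_right, ← inner_W_apply hg ω (D.α i), hfix]
  have horth : ⟪ω, D.α i⟫ = 0 := by
    have h₁ := hω.inner_nonneg hneg
    have h₂ := hω.inner_nonneg (isNonnegComb_α i)
    linarith
  have hσneg : D.IsNonnegComb (-σ (D.α i)) := by
    have := isNonnegComb_apply_of_mem_WI hω hw hneg (by rw [hinner, horth, neg_zero])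
    rwa [map_neg, w_apply] at this
  have hσpos := hσ.2 i ((pairing_eq_zero_iff (α_ne_zero i)).mpr horth)
  exact hσpos.2 (hσpos.1.eq_zero_of_neg hσneg)

theorem one_mem_WI (D : RootSystemWithBase V) (ω : V) : 1 ∈ D.WI ω :=
  ⟨D.W.one_mem, fun i _ => ⟨isNonnegComb_α i, α_ne_zero i⟩⟩

theorem s_mul_mem_WI (hw : w ∈ D.WI ω) {i : Fin D.l} (hi : D.pairing (w ω) (D.α i) ≠ 0) :
    D.s i * w ∈ D.WI ω := by
  refine ⟨D.W.mul_mem (s_mem_W i) hw.1, fun j hj => ?_⟩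
  have hroot := W_apply_mem_Φ hw.1 (D.α_mem j)
  refine ⟨?_, D.root_ne_zero _ (D.s_root _ hroot i)⟩
  by_contra hneg
  rw [← eq_α_of_not_isNonnegComb_s_apply hroot (hw.2 j hj).1 hneg, pairing_W_apply hw.1] at hi
  exact hi hj

theorem sub_W_apply_mem_rootLattice (hlam : ∀ β ∈ D.Φ, ∃ z : ℤ, D.pairing lam β = z)
    (hg : g ∈ D.W) : lam - g lam ∈ D.rootLattice := by
  refine W_induction (p := fun g => lam - g lam ∈ D.rootLattice) (by simp) (fun i g hg ih => ?_) hg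
  obtain ⟨z, hz⟩ := hlam _ (W_apply_mem_Φ (D.W.inv_mem hg) (D.α_mem i))
  rw [LinearEquiv.mul_apply, s_apply_eq_sub_pairing, pairing_W_apply_left hg, hz,
    Int.cast_smul_eq_zsmul, ← sub_add]
  exact add_mem ih (Submodule.smul_mem _ z (α_mem_rootLattice i))

theorem vle_sum_sub_ceil (hlam : ∀ β ∈ D.Φ, ∃ z : ℤ, D.pairing lam β = z) (hg : g ∈ D.W)
    (hle : D.vle (g lam) 0) :
    D.vle (g lam) (∑ i, (D.coeff i lam - ⌈D.coeff i lam⌉) • D.α i) := by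
  refine vle_iff.mpr fun i => ?_
  obtain ⟨z, hz⟩ := exists_int_coeff_eq (sub_W_apply_mem_rootLattice hlam hg) i
  rw [map_sub] at hz
  have hnonpos : D.coeff i (g lam) ≤ 0 := by simpa only [map_zero] using vle_iff.mp hle i
  have hceil : ⌈D.coeff i lam⌉ ≤ z := Int.ceil_le.mpr (by linarith)
  have hcast : (⌈D.coeff i lam⌉ : ℝ) ≤ z := Int.cast_le.mpr hceil
  rw [coeff_sum_smul]
  linarith

theorem height_sub_W_apply_le_len (hlam : ∀ β ∈ D.Φ, D.pairing lam β ≤ 1) (hg : g ∈ D.W) :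
    D.height (lam - g lam) ≤ D.len g := by
  obtain ⟨L, hL, rfl⟩ := exists_reduced_word hg
  rw [← hL]
  clear hg hL
  induction L with
  | nil => simp [wordProd]
  | cons i L ih =>
    have hL := wordProd_mem_W L
    have hi := hlam _ (W_apply_mem_Φ (D.W.inv_mem hL) (D.α_mem i))
    rw [wordProd_cons, LinearEquiv.mul_apply, s_apply_eq_sub_pairing, pairing_W_apply_left hL,
      ← sub_add, map_add, map_smul, height_α, smul_eq_mul, mul_one, List.length_cons, Nat.cast_succ]
    exact add_le_add ih hi

/-! ### Length in the orbit of a minuscule weight -/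

theorem IsMinuscule.exists_int_pairing_eq (hω : D.IsMinuscule ω) (hβ : β ∈ D.Φ) :
    ∃ z : ℤ, D.pairing ω β = z := by
  rcases hω.2 β hβ with h | h | h
  · exact ⟨-1, by simpa using h⟩
  · exact ⟨0, by simpa using h⟩
  · exact ⟨1, by simpa using h⟩

theorem IsMinuscule.pairing_le_one (hω : D.IsMinuscule ω) (hβ : β ∈ D.Φ) :
    D.pairing ω β ≤ 1 := by
  rcases hω.2 β hβ with h | h | h <;> norm_num [h]

theorem IsMinuscule.eq_one_or_eq_neg_one_of_pairing_lt (hω : D.IsMinuscule ω) (hw : w ∈ D.W)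
    (hσ : σ ∈ D.W) (hβ : β ∈ D.Φ) (hlt : D.pairing (σ ω) β < D.pairing (w ω) β) :
    D.pairing (w ω) β = 1 ∨ D.pairing (σ ω) β = -1 := by
  rw [pairing_W_apply_left hw, pairing_W_apply_left hσ] at hlt ⊢
  have hw_values := hω.2 _ (W_apply_mem_Φ (D.W.inv_mem hw) hβ)
  have hσ_values := hω.2 _ (W_apply_mem_Φ (D.W.inv_mem hσ) hβ)
  grind

/-- Expanding one argument of `(v, v) > 0` in the simple roots produces the simple root. -/
theorem exists_pairing_pos_and_isNonnegComb_sub_α (hv : D.IsNonnegComb v)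
    (hlat : v ∈ D.rootLattice) (hv0 : v ≠ 0) :
    ∃ i, 0 < D.pairing v (D.α i) ∧ D.IsNonnegComb (v - D.α i) := by
  have hsum : ∑ _i : Fin D.l, 0 < ∑ i, D.coeff i v * ⟪v, D.α i⟫ := by
    simp only [← real_inner_smul_right, ← inner_sum, sum_coeff_smul, Finset.sum_const_zero]
    exact real_inner_self_pos.mpr hv0
  obtain ⟨i, -, hi⟩ := Finset.exists_lt_of_sum_lt hsum
  have hcoeff : 0 < D.coeff i v :=
    (isNonnegComb_iff.mp hv i).lt_of_ne fun h0 => by simp [← h0] at hi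
  refine ⟨i, (pairing_pos_iff (α_ne_zero i)).mpr (pos_of_mul_pos_right hi hcoeff.le), hv.sub_α ?_⟩
  obtain ⟨z, hz⟩ := exists_int_coeff_eq hlat i
  rw [hz] at hcoeff ⊢
  exact_mod_cast hcoeff

theorem IsMinuscule.sub_mem_rootLattice (hω : D.IsMinuscule ω) (hw : w ∈ D.W) (hσ : σ ∈ D.W) :
    w ω - σ ω ∈ D.rootLattice := by
  have hint : ∀ β ∈ D.Φ, ∃ z : ℤ, D.pairing ω β = z := fun _ => hω.exists_int_pairing_eq
  rw [← sub_sub_sub_cancel_left _ _ ω]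
  exact sub_mem (sub_W_apply_mem_rootLattice hint hσ) (sub_W_apply_mem_rootLattice hint hw)

theorem IsMinuscule.exists_s_mul_mem_WI (hω : D.IsMinuscule ω) (hw : w ∈ D.WI ω)
    (hσ : σ ∈ D.WI ω) (hle : D.vle (σ ω) (w ω)) (hne : w ω ≠ σ ω) :
    ∃ i, D.IsNonnegComb (w ω - σ ω - D.α i) ∧
      (D.s i * w ∈ D.WI ω ∧ (D.s i * w) ω = w ω - D.α i ∨
        D.s i * σ ∈ D.WI ω ∧ (D.s i * σ) ω = σ ω + D.α i) := by
  obtain ⟨i, hpos, hsub⟩ := exists_pairing_pos_and_isNonnegComb_sub_α hle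
    (hω.sub_mem_rootLattice hw.1 hσ.1) (sub_ne_zero.mpr hne)
  rw [pairing_sub_left, sub_pos] at hpos
  refine ⟨i, hsub, ?_⟩
  rcases hω.eq_one_or_eq_neg_one_of_pairing_lt hw.1 hσ.1 (D.α_mem i) hpos with hi | hi
  · refine .inl ⟨s_mul_mem_WI hw (by norm_num [hi]), ?_⟩
    rw [LinearEquiv.mul_apply, s_apply_eq_sub_pairing, hi, one_smul]
  · refine .inr ⟨s_mul_mem_WI hσ (by norm_num [hi]), ?_⟩
    rw [LinearEquiv.mul_apply, s_apply_eq_sub_pairing, hi, neg_one_smul, sub_neg_eq_add]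

theorem IsMinuscule.len_mul_inv_le_height (hω : D.IsMinuscule ω) (hw : w ∈ D.WI ω)
    (hσ : σ ∈ D.WI ω) (hle : D.vle (σ ω) (w ω)) :
    (D.len (σ * w⁻¹) : ℝ) ≤ D.height (w ω - σ ω) := by
  obtain ⟨N, hN⟩ := hle.exists_nat_height_eq (hω.sub_mem_rootLattice hw.1 hσ.1)
  rw [hN, Nat.cast_le]
  induction N generalizing w σ with
  | zero =>
    rw [Nat.cast_zero, hle.height_eq_zero_iff, sub_eq_zero] at hN
    rw [hω.1.injOn_WI hw hσ hN, mul_inv_cancel, len_one]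
  | succ N ih =>
    have hne : w ω ≠ σ ω := fun heq => by
      rw [heq, sub_self, map_zero] at hN
      exact (Nat.cast_add_one_pos N).ne (hN.trans (Nat.cast_succ N))
    obtain ⟨i, hsub, hstep⟩ := hω.exists_s_mul_mem_WI hw hσ hle hne
    have hheight : D.height (w ω - σ ω - D.α i) = N := by
      rw [map_sub, hN, height_α, Nat.cast_succ, add_sub_cancel_right]
    rcases hstep with ⟨hw', hw'ω⟩ | ⟨hσ', hσ'ω⟩
    · have hv : (D.s i * w) ω - σ ω = w ω - σ ω - D.α i := by rw [hw'ω, sub_right_comm]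
      have hle' : D.vle (σ ω) ((D.s i * w) ω) := by rwa [vle, hv]
      calc D.len (σ * w⁻¹) = D.len (σ * (D.s i * w)⁻¹ * D.s i) := by
            rw [mul_inv_rev, inv_s, ← mul_assoc, mul_s_mul_s]
        _ ≤ D.len (σ * (D.s i * w)⁻¹) + D.len (D.s i) :=
            len_mul_le (D.W.mul_mem hσ.1 (D.W.inv_mem hw'.1)) (s_mem_W i)
        _ ≤ N + 1 := add_le_add (ih hw' hσ hle' (hv ▸ hheight)) (len_s_le i)
    · have hv : w ω - (D.s i * σ) ω = w ω - σ ω - D.α i := by rw [hσ'ω, sub_sub]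
      have hle' : D.vle ((D.s i * σ) ω) (w ω) := by rwa [vle, hv]
      calc D.len (σ * w⁻¹) = D.len (D.s i * (D.s i * σ * w⁻¹)) := by
            rw [mul_assoc (D.s i) σ, s_mul_s_mul]
        _ ≤ D.len (D.s i) + D.len (D.s i * σ * w⁻¹) :=
            len_mul_le (s_mem_W i) (D.W.mul_mem hσ'.1 (D.W.inv_mem hw.1))
        _ ≤ 1 + N := add_le_add (len_s_le i) (ih hw hσ' hle' (hv ▸ hheight))
        _ = N + 1 := add_comm 1 N

theorem IsMinuscule.len_eq_height (hω : D.IsMinuscule ω) (hw : w ∈ D.WI ω) :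
    (D.len w : ℝ) = D.height (ω - w ω) := by
  refine le_antisymm ?_ (height_sub_W_apply_le_len (fun β hβ => hω.pairing_le_one hβ) hw.1)
  simpa using hω.len_mul_inv_le_height (D.one_mem_WI ω) hw (hω.1.vle_W_apply hw.1)

theorem IsMinuscule.wle_of_vle (hω : D.IsMinuscule ω) (hw : w ∈ D.WI ω) (hσ : σ ∈ D.WI ω)
    (hle : D.vle (σ ω) (w ω)) : D.wle w σ := by
  have hsub : D.len σ ≤ D.len (σ * w⁻¹) + D.len w := by
    simpa using len_mul_le (D.W.mul_mem hσ.1 (D.W.inv_mem hw.1)) hw.1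
  have hsuper : (D.len w + D.len (σ * w⁻¹) : ℝ) ≤ D.len σ :=
    calc (D.len w + D.len (σ * w⁻¹) : ℝ)
        ≤ D.height (ω - w ω) + D.height (w ω - σ ω) :=
          add_le_add (hω.len_eq_height hw).le (hω.len_mul_inv_le_height hw hσ hle)
      _ = D.height (ω - σ ω) := by rw [← map_add, sub_add_sub_cancel]
      _ = D.len σ := (hω.len_eq_height hσ).symm
  exact le_antisymm (hsub.trans_eq (add_comm _ _)) (by exact_mod_cast hsuper)

end RootSystemWithBase

/-- Let `ω = ∑ m i • α i` be a minuscule weight with nonnegative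
rational coefficients and `w` the unique element of `W^I` with
`w(ω) = ∑ (m i − ⌈m i⌉) • α i`.  If `σ ∈ W^I` satisfies `σ(nω) ≤ 0` for some positive
integer `n`, then `w ≤ σ`, that is, `ℓ(σ) = ℓ(w) + ℓ(σ w⁻¹)`. -/
theorem stmt8 {V : Type*} [NormedAddCommGroup V] [InnerProductSpace ℝ V]
    (D : RootSystemWithBase V) (m : Fin D.l → ℚ) (hm : ∀ i, 0 ≤ m i)
    (ω : V) (hω : ω = ∑ i, (m i : ℝ) • D.α i) (hmin : D.IsMinuscule ω)
    (w : V ≃ₗ[ℝ] V) (hwI : w ∈ D.WI ω)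
    (hwω : w ω = ∑ i, ((m i : ℝ) - ((⌈m i⌉ : ℤ) : ℝ)) • D.α i)
    (σ : V ≃ₗ[ℝ] V) (hσ : σ ∈ D.WI ω)
    (n : ℕ) (hn : 0 < n) (hneg : D.vle (σ ((n : ℝ) • ω)) 0) :
    D.len σ = D.len w + D.len (σ * w⁻¹) := by
  have hσω : D.vle (σ ω) 0 := by
    rw [map_smul] at hneg
    exact RootSystemWithBase.vle_zero_of_smul (Nat.cast_pos.mpr hn) hneg
  have hcoeff (i) : D.coeff i ω = m i := by rw [hω, RootSystemWithBase.coeff_sum_smul]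
  have hle : D.vle (σ ω) (w ω) := by
    simpa only [hwω, hcoeff, Rat.ceil_cast] using
      RootSystemWithBase.vle_sum_sub_ceil (fun β hβ => hmin.exists_int_pairing_eq hβ) hσ.1 hσω
  exact hmin.wle_of_vle hwI hσ hle
end

section
/- Let 2 ≤ r ≤ n−2 and let w, τ ∈ W^{I_r} be written in canonical form w = (s_{a_i}·s_{a_i−1}⋯s_i)·(s_{a_{i+1}}⋯s_{i+1})⋯(s_{a_r}⋯s_r) and τ = (s_{b_k}·s_{b_k−1}⋯s_k)·(s_{b_{k+1}}⋯s_{k+1})⋯(s_{b_r}⋯s_r), where 1 ≤ i ≤ r, a_i < a_{i+1} < ⋯ < a_r, j ≤ a_j ≤ n−1 for i ≤ j ≤ r, ℓ(w) = Σ_{j=i}^r (a_j − j + 1), and similarly 1 ≤ k ≤ r, b_k < ⋯ < b_r, j ≤ b_j ≤ n−1 for k ≤ j ≤ r, ℓ(τ) = Σ_{j=k}^r (b_j − j + 1). Then w ≤ τ if and only if k ≤ i and b_j ≥ a_j for all j with i ≤ j ≤ r. -/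
/-!  Setting: `W = S_N`, the symmetric group of `{1, …, N}`, acting on `ℝ^N` by
permuting coordinates (`w · e_i = e_{w(i)}`).  Vectors, roots and indices are written
1-based: `stdE N j` is the standard basis vector `e_j` (for `1 ≤ j ≤ N`),
`sroot N i = α_i = e_i − e_{i+1}` is the `i`-th simple root (for `1 ≤ i ≤ N−1`), and
`sTrans N i = s_i` is the adjacent transposition `(i, i+1)`. -/

namespace SnPaper

/-- The standard basis vector `e_j` of `ℝ^N` (1-based; junk value `0` out of range). -/
noncomputable def stdE (N j : ℕ) : Fin N → ℝ :=
  if h : 1 ≤ j ∧ j ≤ N then Pi.single (⟨j - 1, by omega⟩ : Fin N) 1 else 0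

/-- The simple root `α_i = e_i − e_{i+1}`. -/
noncomputable def sroot (N i : ℕ) : Fin N → ℝ := stdE N i - stdE N (i + 1)

/-- The adjacent transposition `s_i = (i, i+1)` (1-based; junk value `1` out of range). -/
def sTrans (N i : ℕ) : Equiv.Perm (Fin N) :=
  if h : 1 ≤ i ∧ i + 1 ≤ N then
    Equiv.swap (⟨i - 1, by omega⟩ : Fin N) (⟨i, by omega⟩ : Fin N)
  else 1

/-- The action of `w ∈ S_N` on `ℝ^N` permuting coordinates: `w · e_i = e_{w(i)}`. -/
def permAct (N : ℕ) (w : Equiv.Perm (Fin N)) (v : Fin N → ℝ) : Fin N → ℝ := v ∘ w.symm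

/-- `v` is a combination of the simple roots `α_1, …, α_{N−1}` with all
coefficients `≥ 0`. -/
def IsNonnegComb (N : ℕ) (v : Fin N → ℝ) : Prop :=
  ∃ c : ℕ → ℝ, (∀ i, 0 ≤ c i) ∧ v = ∑ i ∈ Finset.Icc 1 (N - 1), c i • sroot N i

/-- `v > 0`: a nonzero nonnegative combination of the simple roots. -/
def IsPos (N : ℕ) (v : Fin N → ℝ) : Prop := IsNonnegComb N v ∧ v ≠ 0

/-- `x ≤ y` for vectors: `y − x` is a nonnegative combination of the simple roots. -/
def vle (N : ℕ) (x y : Fin N → ℝ) : Prop := IsNonnegComb N (y - x)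

/-- The Coxeter length `ℓ(w)`: the least `k` such that `w` is a product of `k` adjacent
transpositions `s_i`, `1 ≤ i ≤ N−1`. -/
noncomputable def len (N : ℕ) (w : Equiv.Perm (Fin N)) : ℕ :=
  sInf {k | ∃ L : List ℕ, (∀ i ∈ L, 1 ≤ i ∧ i ≤ N - 1) ∧ L.length = k ∧
    (L.map (sTrans N)).prod = w}

/-- `w ≤ τ` in `W`:  `ℓ(τ) = ℓ(w) + ℓ(τ w⁻¹)`. -/
def wle (N : ℕ) (w τ : Equiv.Perm (Fin N)) : Prop :=
  len N τ = len N w + len N (τ * w⁻¹)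

/-- `W^{I_r} = {w ∈ W : w(α_j) > 0 for all j ≠ r}`. -/
def WIr (N r : ℕ) : Set (Equiv.Perm (Fin N)) :=
  {w | ∀ j, 1 ≤ j → j ≤ N - 1 → j ≠ r → IsPos N (permAct N w (sroot N j))}

/-- The block `s_a · s_{a−1} ⋯ s_j` of consecutive simple reflections. -/
def block (N j a : ℕ) : Equiv.Perm (Fin N) :=
  ((List.range' j (a + 1 - j)).reverse.map (sTrans N)).prod

/-- The canonical form `(s_{a_i} ⋯ s_i) · (s_{a_{i+1}} ⋯ s_{i+1}) ⋯ (s_{a_r} ⋯ s_r)`. -/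
def canonForm (N i r : ℕ) (a : ℕ → ℕ) : Equiv.Perm (Fin N) :=
  ((List.range' i (r + 1 - i)).map fun j => block N j (a j)).prod

/-- The fundamental weight `ω_r = e_1 + ⋯ + e_r − (r/N)(e_1 + ⋯ + e_N)`. -/
noncomputable def fundWeight (N r : ℕ) : Fin N → ℝ :=
  (∑ i ∈ Finset.Icc 1 r, stdE N i) - ((r : ℝ) / (N : ℝ)) • ∑ i ∈ Finset.Icc 1 N, stdE N i

end SnPaper

namespace SnPaper

/-! For a set `S` of positions, the displacement `∑_{p ∈ S} (x(p) − p)` grows by at most one when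
`x` is multiplied on the left by a simple reflection, and if it does grow by one then no value
`x(p)`, `p ∈ S`, decreases. Hence it is at most `ℓ(x)`; and if it equals the length at both `w`
and `τ`, then `w ≤ τ` forces `w(p) ≤ τ(p)` for all `p ∈ S`. A canonical form fixes the positions
below `i` and sends `j` to `a_j + 1` for `i ≤ j ≤ r`, so its displacement on the first `r`
positions is the number of letters it is written with, which is therefore its length.
Comparing values gives the necessity of the conditions. Conversely, splitting each block
`s_{b_j} ⋯ s_j` of `τ` at `a_j` and moving the part above `a_j` to the left, past the blocks of
`w` with smaller index, writes `τ` as `u w` with `u` of length at most `ℓ(τ) − ℓ(w)`. -/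

section

open Finset Equiv

variable {n : ℕ}

section Transposition

theorem sTrans_apply_of_ne {c : ℕ} {p : Fin n} (hp : (p : ℕ) + 1 ≠ c) (hp' : (p : ℕ) ≠ c) :
    sTrans n c p = p := by
  unfold sTrans
  split_ifs with h
  · exact swap_apply_of_ne_of_ne (Fin.ne_of_val_ne (by grind)) (Fin.ne_of_val_ne hp')
  · rfl

theorem sTrans_apply_val {c : ℕ} (hc : 1 ≤ c) (hcn : c < n) (p : Fin n) :
    (sTrans n c p : ℕ) = if (p : ℕ) + 1 = c then c else if (p : ℕ) = c then c - 1 else p := by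
  rw [sTrans, dif_pos ⟨hc, hcn⟩, swap_apply_def]
  grind

theorem commute_sTrans_of_add_one_lt {c d : ℕ} (h : c + 1 < d) :
    Commute (sTrans n c) (sTrans n d) := by
  refine Perm.Disjoint.commute fun p => ?_
  by_cases hp : (p : ℕ) + 1 = c ∨ (p : ℕ) = c
  · exact .inr (sTrans_apply_of_ne (by omega) (by omega))
  · exact .inl (sTrans_apply_of_ne (by omega) (by omega))

end Transposition

section Length

theorem len_list_prod_le {L : List ℕ} (hL : ∀ c ∈ L, 1 ≤ c ∧ c ≤ n - 1) :
    len n (L.map (sTrans n)).prod ≤ L.length :=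
  Nat.sInf_le ⟨L, hL, rfl, rfl⟩

theorem exists_word (u : Perm (Fin n)) :
    ∃ L : List ℕ, (∀ c ∈ L, 1 ≤ c ∧ c ≤ n - 1) ∧ (L.map (sTrans n)).prod = u := by
  obtain _ | m := n
  · exact ⟨[], by simp, Subsingleton.elim _ _⟩
  have hu : u ∈ Submonoid.closure (Set.range fun i : Fin m => swap i.castSucc i.succ) :=
    Perm.mclosure_swap_castSucc_succ m ▸ Submonoid.mem_top u
  induction hu using Submonoid.closure_induction with
  | mem _ h =>
    obtain ⟨i, rfl⟩ := h
    have hi : sTrans (m + 1) (i + 1) = swap i.castSucc i.succ := dif_pos ⟨by omega, by omega⟩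
    exact ⟨[(i : ℕ) + 1], by grind, by simp [hi]⟩
  | one => exact ⟨[], by simp, by simp⟩
  | mul _ _ _ _ hx hy =>
    obtain ⟨L, hL, rfl⟩ := hx
    obtain ⟨M, hM, rfl⟩ := hy
    exact ⟨L ++ M, by grind, by simp⟩

theorem exists_word_length_eq_len (u : Perm (Fin n)) :
    ∃ L : List ℕ, (∀ c ∈ L, 1 ≤ c ∧ c ≤ n - 1) ∧ L.length = len n u ∧
      (L.map (sTrans n)).prod = u := by
  obtain ⟨L, hL, hu⟩ := exists_word u
  exact Nat.sInf_mem (s := {k | ∃ L : List ℕ, (∀ c ∈ L, 1 ≤ c ∧ c ≤ n - 1) ∧ L.length = k ∧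
    (L.map (sTrans n)).prod = u}) ⟨L.length, L, hL, rfl, hu⟩

theorem len_one : len n 1 = 0 :=
  Nat.le_zero.1 (len_list_prod_le (L := []) (by simp))

theorem len_mul_le (u v : Perm (Fin n)) : len n (u * v) ≤ len n u + len n v := by
  obtain ⟨L, hL, hLlen, hLu⟩ := exists_word_length_eq_len u
  obtain ⟨M, hM, hMlen, hMv⟩ := exists_word_length_eq_len v
  have h := len_list_prod_le (n := n) (L := L ++ M) (by grind)
  rwa [List.map_append, List.prod_append, List.length_append, hLu, hMv, hLlen, hMlen] at h

end Length

section Displacement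

/-- The total displacement `∑_{p ∈ S} (x(p) − p)` of the positions in `S`; a lower bound for the
Coxeter length. It is integer-valued because single summands can be negative. -/
def displacement (S : Finset (Fin n)) (x : Perm (Fin n)) : ℤ :=
  ∑ p ∈ S, (((x p : ℕ) : ℤ) - (p : ℕ))

variable (S : Finset (Fin n))

theorem displacement_one : displacement S 1 = 0 := by
  simp [displacement]

theorem displacement_sTrans_mul {c : ℕ} (hc : 1 ≤ c) (hcn : c < n) (x : Perm (Fin n)) :
    displacement S (sTrans n c * x) =
      displacement S x + #{p ∈ S | (x p : ℕ) + 1 = c} - #{p ∈ S | (x p : ℕ) = c} := by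
  have hval (p : Fin n) : (((sTrans n c * x) p : ℕ) : ℤ) - (p : ℕ) =
      ((x p : ℕ) - (p : ℕ)) + (if (x p : ℕ) + 1 = c then 1 else 0)
        - (if (x p : ℕ) = c then 1 else 0) := by
    rw [Perm.mul_apply, sTrans_apply_val hc hcn]
    grind
  simp only [displacement, hval, sum_sub_distrib, sum_add_distrib, sum_boole]

theorem card_filter_apply_add_one_eq_le_one (x : Perm (Fin n)) (c : ℕ) :
    #{p ∈ S | (x p : ℕ) + 1 = c} ≤ 1 := by
  refine card_le_one.2 fun p hp q hq => x.injective (Fin.ext ?_)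
  have hp := (mem_filter.1 hp).2
  have hq := (mem_filter.1 hq).2
  omega

theorem displacement_sTrans_mul_le {c : ℕ} (hc : 1 ≤ c) (hcn : c < n) (x : Perm (Fin n)) :
    displacement S (sTrans n c * x) ≤ displacement S x + 1 := by
  have := displacement_sTrans_mul S hc hcn x
  have := card_filter_apply_add_one_eq_le_one S x c
  omega

theorem apply_le_sTrans_mul_apply {S : Finset (Fin n)} {c : ℕ} (hc : 1 ≤ c) (hcn : c < n)
    {x : Perm (Fin n)} (h : displacement S (sTrans n c * x) = displacement S x + 1)
    {p : Fin n} (hp : p ∈ S) : x p ≤ (sTrans n c * x) p := by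
  have hcard : #{q ∈ S | (x q : ℕ) = c} = 0 := by
    have := displacement_sTrans_mul S hc hcn x
    have := card_filter_apply_add_one_eq_le_one S x c
    omega
  have hpc : (x p : ℕ) ≠ c := filter_eq_empty_iff.1 (card_eq_zero.1 hcard) hp
  rw [Fin.le_def, Perm.mul_apply, sTrans_apply_val hc hcn]
  grind

theorem displacement_list_prod_mul_le {L : List ℕ} (hL : ∀ c ∈ L, 1 ≤ c ∧ c ≤ n - 1)
    (x : Perm (Fin n)) :
    displacement S ((L.map (sTrans n)).prod * x) ≤ displacement S x + L.length := by
  induction L with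
  | nil => simp
  | cons c L ih =>
    obtain ⟨hc, hL⟩ := List.forall_mem_cons.1 hL
    have hstep := displacement_sTrans_mul_le S hc.1 (by omega) ((L.map (sTrans n)).prod * x)
    have htail := ih hL
    rw [List.map_cons, List.prod_cons, List.length_cons, mul_assoc]
    push_cast
    linarith

theorem apply_le_list_prod_mul_apply {S : Finset (Fin n)} {L : List ℕ}
    (hL : ∀ c ∈ L, 1 ≤ c ∧ c ≤ n - 1) {x : Perm (Fin n)}
    (h : displacement S ((L.map (sTrans n)).prod * x) = displacement S x + L.length)
    {p : Fin n} (hp : p ∈ S) : x p ≤ ((L.map (sTrans n)).prod * x) p := by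
  induction L with
  | nil => simp
  | cons c L ih =>
    obtain ⟨hc, hL⟩ := List.forall_mem_cons.1 hL
    rw [List.map_cons, List.prod_cons, mul_assoc] at h ⊢
    rw [List.length_cons] at h
    push_cast at h
    have hcn : c < n := by omega
    have hstep := displacement_sTrans_mul_le S hc.1 hcn ((L.map (sTrans n)).prod * x)
    have htail := displacement_list_prod_mul_le S hL x
    exact (ih hL (by linarith)).trans (apply_le_sTrans_mul_apply hc.1 hcn (by linarith) hp)

theorem displacement_le_len (x : Perm (Fin n)) : displacement S x ≤ len n x := by
  obtain ⟨L, hL, hlen, hx⟩ := exists_word_length_eq_len x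
  have h := displacement_list_prod_mul_le S hL 1
  rwa [mul_one, hx, hlen, displacement_one, zero_add] at h

theorem apply_le_apply_of_wle {S : Finset (Fin n)} {w τ : Perm (Fin n)}
    (hw : displacement S w = len n w) (hτ : displacement S τ = len n τ) (h : wle n w τ)
    {p : Fin n} (hp : p ∈ S) : w p ≤ τ p := by
  obtain ⟨L, hL, hlen, hprod⟩ := exists_word_length_eq_len (τ * w⁻¹)
  have hmul : (L.map (sTrans n)).prod * w = τ := by rw [hprod, inv_mul_cancel_right]
  have hdisp : displacement S ((L.map (sTrans n)).prod * w) = displacement S w + L.length := by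
    rw [hmul, hτ, hw, hlen, h, Nat.cast_add]
  exact hmul ▸ apply_le_list_prod_mul_apply hL hdisp hp

end Displacement

section Block

theorem block_self (j : ℕ) : block n j j = sTrans n j := by
  simp [block]

theorem block_mul_block {j m a : ℕ} (hj : j ≤ m + 1) (hm : m ≤ a) :
    block n (m + 1) a * block n j m = block n j a := by
  have hrange : List.range' j (m + 1 - j) ++ List.range' (m + 1) (a + 1 - (m + 1)) =
      List.range' j (a + 1 - j) := by
    convert List.range'_append_1 using 3 <;> omega
  simp only [block, ← hrange, List.reverse_append, List.map_append, List.prod_append]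

theorem block_apply_of_lt_or_lt {j a : ℕ} {p : Fin n} (hp : (p : ℕ) + 1 < j ∨ a < p) :
    block n j a p = p := by
  refine list_prod_mem (S := MulAction.stabilizer (Perm (Fin n)) p) fun x hx => ?_
  obtain ⟨c, hc, rfl⟩ := List.mem_map.1 hx
  rw [List.mem_reverse, List.mem_range'_1] at hc
  exact sTrans_apply_of_ne (by omega) (by omega)

theorem block_apply_of_val_add_one_eq {j a : ℕ} {p : Fin n} (hp : (p : ℕ) + 1 = j)
    (hja : j ≤ a + 1) (han : a < n) : (block n j a p : ℕ) = a := by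
  subst hp
  induction a, Nat.le_of_succ_le_succ hja using Nat.le_induction with
  | base => simp [block]
  | succ a hpa ih =>
    have hval := ih (by omega) (by omega)
    rw [← block_mul_block (m := a) (by omega) (by omega), block_self, Perm.mul_apply,
      sTrans_apply_val (by omega) han, hval, if_pos rfl]

theorem len_block_le {j a : ℕ} (hj : 1 ≤ j) (han : a < n) : len n (block n j a) ≤ a + 1 - j := by
  have h := len_list_prod_le (n := n) (L := (List.range' j (a + 1 - j)).reverse) (by
    simp only [List.mem_reverse, List.mem_range'_1]
    omega)
  rwa [List.length_reverse, List.length_range'] at h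

theorem commute_block_block {j a j' a' : ℕ} (h : a + 1 < j') :
    Commute (block n j a) (block n j' a') := by
  refine Commute.list_prod_left _ _ fun x hx => Commute.list_prod_right _ _ fun y hy => ?_
  obtain ⟨c, hc, rfl⟩ := List.mem_map.1 hx
  obtain ⟨d, hd, rfl⟩ := List.mem_map.1 hy
  rw [List.mem_reverse, List.mem_range'_1] at hc hd
  exact commute_sTrans_of_add_one_lt (by omega)

end Block

section CanonForm

variable {i r : ℕ} {a b : ℕ → ℕ}

theorem canonForm_of_lt (h : r < i) : canonForm n i r a = 1 := by
  simp [canonForm, Nat.sub_eq_zero_of_le h]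

theorem canonForm_self : canonForm n r r a = block n r (a r) := by
  simp [canonForm]

theorem canonForm_mul_canonForm {m : ℕ} (hi : i ≤ m + 1) (hm : m ≤ r) :
    canonForm n i m a * canonForm n (m + 1) r a = canonForm n i r a := by
  have hrange : List.range' i (m + 1 - i) ++ List.range' (m + 1) (r + 1 - (m + 1)) =
      List.range' i (r + 1 - i) := by
    convert List.range'_append_1 using 3 <;> omega
  simp only [canonForm, ← hrange, List.map_append, List.prod_append]

theorem canonForm_succ (h : i ≤ r + 1) :
    canonForm n i (r + 1) a = canonForm n i r a * block n (r + 1) (a (r + 1)) := by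
  rw [← canonForm_mul_canonForm h r.le_succ, canonForm_self]

theorem canonForm_apply_of_forall {p : Fin n}
    (h : ∀ j, i ≤ j → j ≤ r → (p : ℕ) + 1 < j ∨ a j < p) : canonForm n i r a p = p := by
  refine list_prod_mem (S := MulAction.stabilizer (Perm (Fin n)) p) fun x hx => ?_
  obtain ⟨j, hj, rfl⟩ := List.mem_map.1 hx
  rw [List.mem_range'_1] at hj
  exact block_apply_of_lt_or_lt (h j hj.1 (by omega))

theorem canonForm_apply_of_val_add_one_lt {p : Fin n} (hp : (p : ℕ) + 1 < i) :
    canonForm n i r a p = p :=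
  canonForm_apply_of_forall fun _ hj _ => .inl (hp.trans_le hj)

theorem canonForm_apply_of_le_val_add_one (ha : StrictMonoOn a (Set.Icc i r)) {p : Fin n}
    (hip : i ≤ (p : ℕ) + 1) (hpr : (p : ℕ) < r) (hpa : (p : ℕ) ≤ a (p + 1))
    (han : a (p + 1) < n) : (canonForm n i r a p : ℕ) = a (p + 1) := by
  have hblock : (block n (p + 1) (a (p + 1)) p : ℕ) = a (p + 1) :=
    block_apply_of_val_add_one_eq rfl (by omega) han
  rw [← canonForm_mul_canonForm (m := p + 1) (by omega) hpr, canonForm_succ hip, Perm.mul_apply,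
    Perm.mul_apply, canonForm_apply_of_val_add_one_lt (Nat.lt_succ_self _),
    canonForm_apply_of_forall, hblock]
  intro j hij hjp
  right
  rw [hblock]
  exact ha ⟨hij, by omega⟩ ⟨hip, hpr⟩ (by omega)

theorem commute_canonForm_block {j d : ℕ} (h : ∀ j', i ≤ j' → j' ≤ r → a j' + 1 < j) :
    Commute (canonForm n i r a) (block n j d) := by
  refine Commute.list_prod_left _ _ fun x hx => ?_
  obtain ⟨j', hj', rfl⟩ := List.mem_map.1 hx
  rw [List.mem_range'_1] at hj'
  exact commute_block_block (h j' hj'.1 (by omega))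

theorem canonForm_mul_inv_succ (ha : StrictMonoOn a (Set.Icc i (r + 1))) (hi : i ≤ r + 1)
    (hra : r ≤ a (r + 1)) (hab : a (r + 1) ≤ b (r + 1)) :
    canonForm n i (r + 1) b * (canonForm n i (r + 1) a)⁻¹ =
      canonForm n i r b * (canonForm n i r a)⁻¹ * block n (a (r + 1) + 1) (b (r + 1)) := by
  have hcomm : Commute (canonForm n i r a) (block n (a (r + 1) + 1) (b (r + 1))) :=
    commute_canonForm_block fun j hij hjr =>
      Nat.succ_lt_succ (ha ⟨hij, by omega⟩ ⟨hi, le_rfl⟩ (by omega))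
  rw [canonForm_succ hi, canonForm_succ hi, ← block_mul_block (Nat.succ_le_succ hra) hab,
    mul_assoc _ (_⁻¹), hcomm.inv_left.eq]
  group

theorem len_canonForm_mul_inv_le (hi : 1 ≤ i) (ha : StrictMonoOn a (Set.Icc i r))
    (hja : ∀ j, i ≤ j → j ≤ r → j ≤ a j + 1) (hab : ∀ j, i ≤ j → j ≤ r → a j ≤ b j)
    (hbn : ∀ j, i ≤ j → j ≤ r → b j < n) :
    (len n (canonForm n i r b * (canonForm n i r a)⁻¹) : ℤ) ≤
      ∑ j ∈ Ico i (r + 1), ((b j : ℤ) - a j) := by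
  induction r with
  | zero =>
    rw [canonForm_of_lt hi, canonForm_of_lt hi, Ico_eq_empty (by omega)]
    simp [len_one]
  | succ r ih =>
    rcases lt_or_ge (r + 1) i with hir | hir
    · rw [canonForm_of_lt hir, canonForm_of_lt hir, Ico_eq_empty (by omega)]
      simp [len_one]
    have hja' := hja (r + 1) hir le_rfl
    have hab' := hab (r + 1) hir le_rfl
    have hmul := len_mul_le (canonForm n i r b * (canonForm n i r a)⁻¹)
      (block n (a (r + 1) + 1) (b (r + 1)))
    have hblock := len_block_le (Nat.le_add_left 1 (a (r + 1))) (hbn (r + 1) hir le_rfl)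
    have ih := ih (ha.mono (Set.Icc_subset_Icc_right r.le_succ))
      (fun j hij hjr => hja j hij (by omega)) (fun j hij hjr => hab j hij (by omega))
      (fun j hij hjr => hbn j hij (by omega))
    rw [canonForm_mul_inv_succ ha hir (by omega) hab', sum_Ico_succ_top hir]
    omega

theorem canonForm_sub_one (hi : 1 ≤ i) : canonForm n i r (fun j => j - 1) = 1 := by
  refine List.prod_eq_one fun x hx => ?_
  obtain ⟨j, hj, rfl⟩ := List.mem_map.1 hx
  rw [List.mem_range'_1] at hj
  have hempty : j - 1 + 1 - j = 0 := by omega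
  simp [block, hempty]

-- The identity is the canonical form with exponents `j - 1`, so this bounds a quotient by it.
theorem len_canonForm_le (hi : 1 ≤ i) (ha : ∀ j, i ≤ j → j ≤ r → j ≤ a j + 1 ∧ a j < n) :
    (len n (canonForm n i r a) : ℤ) ≤ ∑ j ∈ Ico i (r + 1), ((a j : ℤ) + 1 - j) := by
  have h := len_canonForm_mul_inv_le (n := n) (a := fun j => j - 1) (b := a) hi
    (fun j hj j' _ hjj' => Nat.sub_lt_sub_right (hi.trans hj.1) hjj') (by grind) (by grind)
    fun j hij hjr => (ha j hij hjr).2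
  rw [canonForm_sub_one hi, inv_one, mul_one] at h
  refine h.trans_eq (sum_congr rfl fun j hj => ?_)
  have := (mem_Ico.1 hj).1
  grind

theorem displacement_canonForm (hi : 1 ≤ i) (hr : r ≤ n) (ha : StrictMonoOn a (Set.Icc i r))
    (hja : ∀ j, i ≤ j → j ≤ r → j ≤ a j + 1 ∧ a j < n) :
    displacement {p : Fin n | (p : ℕ) < r} (canonForm n i r a) =
      ∑ j ∈ Ico i (r + 1), ((a j : ℤ) + 1 - j) := by
  have hmoved : displacement {p : Fin n | i ≤ (p : ℕ) + 1 ∧ (p : ℕ) < r} (canonForm n i r a) =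
      displacement {p : Fin n | (p : ℕ) < r} (canonForm n i r a) := by
    refine sum_subset (fun p => by grind) fun p hp hp' => ?_
    rw [canonForm_apply_of_val_add_one_lt (by grind), sub_self]
  rw [← hmoved]
  refine sum_bij (fun p _ => (p : ℕ) + 1) (by grind) (by grind) (fun j hj => ?_) fun p hp => ?_
  · obtain ⟨hij, hjr⟩ := mem_Ico.1 hj
    exact ⟨⟨j - 1, by omega⟩, by grind, Nat.sub_add_cancel (hi.trans hij)⟩
  · obtain ⟨hip, hpr⟩ := (mem_filter.1 hp).2
    obtain ⟨hpa, han⟩ := hja (p + 1) hip hpr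
    rw [canonForm_apply_of_le_val_add_one ha hip hpr (by omega) han]
    push_cast
    ring

theorem len_canonForm (hi : 1 ≤ i) (hr : r ≤ n) (ha : StrictMonoOn a (Set.Icc i r))
    (hja : ∀ j, i ≤ j → j ≤ r → j ≤ a j + 1 ∧ a j < n) :
    (len n (canonForm n i r a) : ℤ) = ∑ j ∈ Ico i (r + 1), ((a j : ℤ) + 1 - j) :=
  (len_canonForm_le hi hja).antisymm
    (displacement_canonForm hi hr ha hja ▸ displacement_le_len _ _)

theorem displacement_canonForm_eq_len (hi : 1 ≤ i) (hr : r ≤ n)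
    (ha : StrictMonoOn a (Set.Icc i r)) (hja : ∀ j, i ≤ j → j ≤ r → j ≤ a j + 1 ∧ a j < n) :
    displacement {p : Fin n | (p : ℕ) < r} (canonForm n i r a) = len n (canonForm n i r a) :=
  (displacement_canonForm hi hr ha hja).trans (len_canonForm hi hr ha hja).symm

variable {k : ℕ}

theorem wle_canonForm (hk : 1 ≤ k) (hki : k ≤ i) (hir : i ≤ r + 1) (hr : r ≤ n)
    (ha : StrictMonoOn a (Set.Icc i r)) (hb : StrictMonoOn b (Set.Icc k r))
    (hja : ∀ j, i ≤ j → j ≤ r → j ≤ a j + 1)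
    (hjb : ∀ j, k ≤ j → j ≤ r → j ≤ b j + 1 ∧ b j < n)
    (hab : ∀ j, i ≤ j → j ≤ r → a j ≤ b j) :
    wle n (canonForm n i r a) (canonForm n k r b) := by
  obtain ⟨m, rfl⟩ := Nat.exists_eq_add_of_le' (hk.trans hki)
  have hi : 1 ≤ m + 1 := m.succ_pos
  have hbn : ∀ j, m + 1 ≤ j → j ≤ r → b j < n := fun j hj hjr => (hjb j (by omega) hjr).2
  have han : ∀ j, m + 1 ≤ j → j ≤ r → a j < n := fun j hj hjr =>
    (hab j hj hjr).trans_lt (hbn j hj hjr)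
  have hlen_w := len_canonForm hi hr ha fun j hj hjr => ⟨hja j hj hjr, han j hj hjr⟩
  have hlen_τ := len_canonForm hk hr hb hjb
  have hlen_head := len_canonForm_le (n := n) (r := m) (a := b) hk fun j hj hjm =>
    hjb j hj (by omega)
  have hlen_tail := len_canonForm_mul_inv_le hi ha hja hab hbn
  have hsum : ∑ j ∈ Ico k (r + 1), ((b j : ℤ) + 1 - j) =
      ∑ j ∈ Ico k (m + 1), ((b j : ℤ) + 1 - j) + (∑ j ∈ Ico (m + 1) (r + 1), ((b j : ℤ) - a j) +
        ∑ j ∈ Ico (m + 1) (r + 1), ((a j : ℤ) + 1 - j)) := by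
    rw [← sum_Ico_consecutive _ hki hir, ← sum_add_distrib]
    congr! 2
    ring
  have hquot : len n (canonForm n k r b * (canonForm n (m + 1) r a)⁻¹) ≤
      len n (canonForm n k m b) +
        len n (canonForm n (m + 1) r b * (canonForm n (m + 1) r a)⁻¹) := by
    rw [← canonForm_mul_canonForm hki (Nat.le_of_succ_le_succ hir), mul_assoc]
    exact len_mul_le _ _
  have hmul := len_mul_le (canonForm n k r b * (canonForm n (m + 1) r a)⁻¹)
    (canonForm n (m + 1) r a)
  rw [inv_mul_cancel_right] at hmul
  unfold wle
  omega

theorem canonForm_apply_le_of_wle (hi : 1 ≤ i) (hk : 1 ≤ k) (hr : r ≤ n)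
    (ha : StrictMonoOn a (Set.Icc i r)) (hb : StrictMonoOn b (Set.Icc k r))
    (hja : ∀ j, i ≤ j → j ≤ r → j ≤ a j + 1 ∧ a j < n)
    (hjb : ∀ j, k ≤ j → j ≤ r → j ≤ b j + 1 ∧ b j < n)
    (h : wle n (canonForm n i r a) (canonForm n k r b)) {p : Fin n} (hp : (p : ℕ) < r) :
    canonForm n i r a p ≤ canonForm n k r b p :=
  apply_le_apply_of_wle (displacement_canonForm_eq_len hi hr ha hja)
    (displacement_canonForm_eq_len hk hr hb hjb) h (mem_filter.2 ⟨mem_univ p, hp⟩)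

theorem le_and_le_of_wle_canonForm (hi : 1 ≤ i) (hir : i ≤ r) (hk : 1 ≤ k) (hr : r ≤ n)
    (ha : StrictMonoOn a (Set.Icc i r)) (hb : StrictMonoOn b (Set.Icc k r))
    (hja : ∀ j, i ≤ j → j ≤ r → j ≤ a j ∧ a j < n)
    (hjb : ∀ j, k ≤ j → j ≤ r → j ≤ b j + 1 ∧ b j < n)
    (h : wle n (canonForm n i r a) (canonForm n k r b)) :
    k ≤ i ∧ ∀ j, i ≤ j → j ≤ r → a j ≤ b j := by
  have hle (p : Fin n) (hip : i ≤ (p : ℕ) + 1) (hpr : (p : ℕ) < r) :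
      a (p + 1) ≤ canonForm n k r b p := by
    obtain ⟨hpa, han⟩ := hja (p + 1) hip hpr
    rw [← canonForm_apply_of_le_val_add_one ha hip hpr (by omega) han]
    exact canonForm_apply_le_of_wle hi hk hr ha hb (by grind) hjb h hpr
  have hki : k ≤ i := by
    by_contra! hik
    have hia := (hja i le_rfl hir).1
    have hai := hle ⟨i - 1, by omega⟩ (by grind) (by grind)
    rw [canonForm_apply_of_val_add_one_lt (by grind), Nat.sub_add_cancel hi] at hai
    grind
  refine ⟨hki, fun j hij hjr => ?_⟩
  obtain ⟨hjb', hbn⟩ := hjb j (hki.trans hij) hjr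
  have hj : j - 1 + 1 = j := by omega
  have haj := hle ⟨j - 1, by omega⟩ (by grind) (by grind)
  rwa [canonForm_apply_of_le_val_add_one hb (by grind) (by grind) (by grind) (by grind), hj] at haj

end CanonForm

theorem stmt11_general {r i k : ℕ} {a b : ℕ → ℕ} (hi : 1 ≤ i) (hir : i ≤ r)
    (ha : ∀ j, i ≤ j → j ≤ r → j ≤ a j ∧ a j ≤ n - 1)
    (hainc : ∀ j, i ≤ j → j < r → a j < a (j + 1)) (hk : 1 ≤ k)
    (hb : ∀ j, k ≤ j → j ≤ r → j ≤ b j ∧ b j ≤ n - 1)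
    (hbinc : ∀ j, k ≤ j → j < r → b j < b (j + 1)) :
    wle n (canonForm n i r a) (canonForm n k r b) ↔
      k ≤ i ∧ ∀ j, i ≤ j → j ≤ r → a j ≤ b j := by
  have hr : r ≤ n := (ha r hir le_rfl).1.trans ((ha r hir le_rfl).2.trans (n.sub_le 1))
  have ha_mono : StrictMonoOn a (Set.Icc i r) :=
    strictMonoOn_of_lt_add_one Set.ordConnected_Icc fun j _ hj hj' => hainc j hj.1 hj'.2
  have hb_mono : StrictMonoOn b (Set.Icc k r) :=
    strictMonoOn_of_lt_add_one Set.ordConnected_Icc fun j _ hj hj' => hbinc j hj.1 hj'.2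
  constructor
  · exact le_and_le_of_wle_canonForm hi hir hk hr ha_mono hb_mono (by grind) (by grind)
  · rintro ⟨hki, hab⟩
    exact wle_canonForm hk hki (hir.trans r.le_succ) hr ha_mono hb_mono (by grind) (by grind) hab

end

/-- Let `2 ≤ r ≤ n−2` and let `w, τ ∈ W^{I_r}` be written in canonical
form `w = (s_{a_i} ⋯ s_i) ⋯ (s_{a_r} ⋯ s_r)`, `τ = (s_{b_k} ⋯ s_k) ⋯ (s_{b_r} ⋯ s_r)`.
Then `w ≤ τ` if and only if `k ≤ i` and `b j ≥ a j` for all `i ≤ j ≤ r`. -/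
theorem stmt11 (n r : ℕ) (hn : 4 ≤ n) (hr2 : 2 ≤ r) (hrn : r ≤ n - 2)
    (i k : ℕ) (a b : ℕ → ℕ)
    (hi1 : 1 ≤ i) (hir : i ≤ r)
    (ha : ∀ j, i ≤ j → j ≤ r → j ≤ a j ∧ a j ≤ n - 1)
    (hainc : ∀ j, i ≤ j → j < r → a j < a (j + 1))
    (w : Equiv.Perm (Fin n)) (hwdef : w = canonForm n i r a) (hwI : w ∈ WIr n r)
    (hwlen : len n w = ∑ j ∈ Finset.Icc i r, (a j - j + 1))
    (hk1 : 1 ≤ k) (hkr : k ≤ r)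
    (hb : ∀ j, k ≤ j → j ≤ r → j ≤ b j ∧ b j ≤ n - 1)
    (hbinc : ∀ j, k ≤ j → j < r → b j < b (j + 1))
    (τ : Equiv.Perm (Fin n)) (hτdef : τ = canonForm n k r b) (hτI : τ ∈ WIr n r)
    (hτlen : len n τ = ∑ j ∈ Finset.Icc k r, (b j - j + 1)) :
    wle n w τ ↔ (k ≤ i ∧ ∀ j, i ≤ j → j ≤ r → a j ≤ b j) := by
  subst hwdef hτdef
  exact stmt11_general hi1 hir ha hainc hk1 hb hbinc

end SnPaper
end

section
/- Let 2 ≤ r ≤ n−2, write ω_r = Σ_{i=1}^{n−1} m_i α_i (with m_i = i(n−r)/n for i ≤ r and m_i = r(n−i)/n for r ≤ i ≤ n−1), and let τ_r be the unique element of W^{I_r} with τ_r(ω_r) = Σ_{i=1}^{n−1}(m_i − ⌈m_i⌉)α_i (⌈·⌉ the ceiling). Then τ_r(ω_r) ≤ 0, and for every w ∈ W^{I_r} with w(ω_r) ≤ 0 one has τ_r ≤ w; that is, τ_r is the unique minimal element (for the order ≤ on W) of the set {w ∈ W^{I_r} : w(ω_r) ≤ 0}. -/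
/-!
The length of a permutation is its number of inversions, and the inversions of `w τ⁻¹` correspond
to the symmetric difference of the inversion sets of `w` and `τ`; hence `τ ≤ w` exactly when every
inversion of `τ` is an inversion of `w`.

The coefficient of `α_k` in `w(ω_r)` is `#{i ≤ r | w(i) ≤ k} - k r / n`. For fixed `k` its values
differ by integers as `w` varies, so if all coefficients of `τ(ω_r)` lie in `(-1, 0]`, they are the
largest ones possible subject to `w(ω_r) ≤ 0`: the counts `#{i ≤ r | w(i) ≤ k}` are then at most
those of `τ`. As `w` and `τ` increase on `{1, …, r}` and on `{r + 1, …, n}`, this says that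
`τ(i) ≤ w(i)` on the first block and `w(i) ≤ τ(i)` on the second, so every inversion of `τ` is one
of `w`.
-/

namespace SnPaper

section Inversions

open Equiv Finset

variable {α : Type*} [LinearOrder α]

lemma eq_one_of_monotone [Finite α] {σ : Perm α} (hσ : Monotone σ) : σ = 1 := by
  let e : α ≃o α := (hσ.strictMono_of_injective σ.injective).orderIsoOfSurjective _ σ.surjective
  have he : e = OrderIso.refl α := Subsingleton.elim _ _
  exact Equiv.ext fun i => DFunLike.congr_fun he i

lemma le_of_card_filter_lt_le {β : Type*} [LinearOrder β] {s : Finset α} {a : α} {f g : α → β}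
    (hf : MonotoneOn f s) (hg : MonotoneOn g s) (ha : a ∈ s)
    (h : #{i ∈ s | f i < g a} ≤ #{i ∈ s | g i < g a}) : g a ≤ f a := by
  by_contra! hlt
  have hsub : {i ∈ s | g i < g a} ⊂ {i ∈ s | f i < g a} := by
    refine (ssubset_iff_of_subset fun i hi => ?_).2 ⟨a, by simp [ha, hlt], by simp⟩
    obtain ⟨his, hi⟩ := mem_filter.1 hi
    have hia : i ≤ a := (lt_of_not_ge fun hai => (hg ha his hai).not_gt hi).le
    exact mem_filter.2 ⟨his, (hf his ha hia).trans_lt hlt⟩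
  exact (card_lt_card hsub).not_ge h

variable [Fintype α] {σ τ : Perm α} {a b : α}

/-- The inversion set of a permutation `σ` of a finite linear order: the pairs of positions
`a < b` whose values are out of order. -/
def inversions (σ : Perm α) : Finset (α × α) := {p | p.1 < p.2 ∧ σ p.2 < σ p.1}

lemma mem_inversions {p : α × α} : p ∈ inversions σ ↔ p.1 < p.2 ∧ σ p.2 < σ p.1 := by
  simp [inversions]

lemma inversions_one : inversions (1 : Perm α) = ∅ := by
  ext p
  simpa [mem_inversions] using le_of_lt

lemma inversions_swap_of_covBy (h : a ⋖ b) : inversions (swap a b) = {(a, b)} := by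
  ext ⟨i, j⟩
  have hlt := h.lt
  have hi := h.2 (c := i)
  have hj := h.2 (c := j)
  simp only [mem_inversions, mem_singleton, Prod.mk.injEq, swap_apply_def]
  grind

lemma card_inversions_mul_inv (σ τ : Perm α) :
    #(inversions (σ * τ⁻¹)) = #(inversions σ \ inversions τ) + #(inversions τ \ inversions σ) := by
  -- Pulled back along `τ`, the inversions of `σ * τ⁻¹` are the pairs which `σ` and `τ` order
  -- differently.
  let disagreements : Finset (α × α) := {p | τ p.1 < τ p.2 ∧ σ p.2 < σ p.1}
  have h_inv : #(inversions (σ * τ⁻¹)) = #disagreements :=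
    card_equiv (prodCongr τ⁻¹ τ⁻¹) fun p => by simp [disagreements, mem_inversions]
  have h_lt : disagreements.filter (fun p => p.1 < p.2) = inversions σ \ inversions τ := by
    ext ⟨i, j⟩
    simp only [disagreements, mem_filter, mem_univ, true_and, mem_sdiff, mem_inversions]
    grind [τ.injective.eq_iff]
  have h_gt : #(disagreements.filter (fun p => ¬ p.1 < p.2)) = #(inversions τ \ inversions σ) :=
    card_equiv (prodComm α α) fun ⟨i, j⟩ => by
      simp only [disagreements, mem_filter, mem_univ, true_and, mem_sdiff, mem_inversions,
        prodComm_apply, Prod.fst_swap, Prod.snd_swap]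
      grind [σ.injective.eq_iff]
  rw [h_inv, ← card_filter_add_card_filter_not (fun p : α × α => p.1 < p.2), h_lt, h_gt]

lemma card_inversions_mul_inv_le (σ τ : Perm α) :
    #(inversions (σ * τ⁻¹)) ≤ #(inversions σ) + #(inversions τ) := by
  rw [card_inversions_mul_inv]
  exact add_le_add (card_le_card sdiff_subset) (card_le_card sdiff_subset)

lemma card_inversions_mul_swap_add_one (hab : a ⋖ b) (h : σ b < σ a) :
    #(inversions (σ * swap a b)) + 1 = #(inversions σ) := by
  have hmem : (a, b) ∈ inversions σ := mem_inversions.2 ⟨hab.lt, h⟩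
  have hcard := card_inversions_mul_inv σ (swap a b)
  rw [inversions_swap_of_covBy hab, sdiff_eq_empty_iff_subset.2 (singleton_subset_iff.2 hmem),
    card_empty, add_zero, swap_inv] at hcard
  rw [hcard, ← card_singleton (a, b), card_sdiff_add_card_eq_card (singleton_subset_iff.2 hmem)]

lemma eq_one_of_inversions_eq_empty (h : inversions σ = ∅) : σ = 1 := by
  refine eq_one_of_monotone fun i j hij => ?_
  by_contra! hlt
  have hmem : (i, j) ∈ inversions σ :=
    mem_inversions.2 ⟨hij.lt_of_ne (by rintro rfl; exact hlt.false), hlt⟩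
  simp [h] at hmem

lemma inversions_injective : Function.Injective (inversions (α := α)) := by
  intro σ τ h
  have hcard := card_inversions_mul_inv σ τ
  simp only [h, sdiff_self, bot_eq_empty, card_empty, add_zero, card_eq_zero] at hcard
  exact mul_inv_eq_one.1 (eq_one_of_inversions_eq_empty hcard)

lemma card_filter_apply_lt_eq (s : Finset α) (σ : Perm α) (b : α) :
    #{i ∈ s | σ i < b} + #{i ∈ sᶜ | σ i < b} = #{i | i < b} := by
  rw [← card_union_of_disjoint (disjoint_filter_filter disjoint_compl_right), ← filter_union,
    union_compl]
  exact card_equiv σ (by simp)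

lemma inversions_subset_of_card_filter_lt_le {s : Finset α} (hs : IsLowerSet (s : Set α))
    (hσ : MonotoneOn σ s) (hσc : MonotoneOn σ ↑sᶜ) (hτ : MonotoneOn τ s) (hτc : MonotoneOn τ ↑sᶜ)
    (h : ∀ b, #{i ∈ s | τ i < b} ≤ #{i ∈ s | σ i < b}) : inversions σ ⊆ inversions τ := by
  have h_compl (b : α) : #{i ∈ sᶜ | σ i < b} ≤ #{i ∈ sᶜ | τ i < b} := by
    have := card_filter_apply_lt_eq s σ b
    have := card_filter_apply_lt_eq s τ b
    have := h b
    omega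
  rintro ⟨i, j⟩ hij
  obtain ⟨hlt, hinv⟩ := mem_inversions.1 hij
  have hj : j ∉ s := fun hj => (hσ (hs hlt.le hj) hj hlt.le).not_gt hinv
  have hi : i ∈ s := by
    by_contra hi
    exact (hσc (by simpa) (by simpa) hlt.le).not_gt hinv
  refine mem_inversions.2 ⟨hlt, ?_⟩
  calc τ j ≤ σ j := le_of_card_filter_lt_le hσc hτc (by simpa) (h_compl _)
    _ < σ i := hinv
    _ ≤ τ i := le_of_card_filter_lt_le hτ hσ hi (h _)

end Inversions

section Length

open Equiv Finset

variable {n : ℕ} {σ τ : Perm (Fin n)} {a b : Fin n}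

lemma exists_covBy_apply_lt_of_ne_one (hσ : σ ≠ 1) : ∃ a b, a ⋖ b ∧ σ b < σ a := by
  contrapose! hσ
  have hmono : Monotone σ :=
    monotone_of_le_succ fun a ha => hσ a _ (Order.covBy_succ_of_not_isMax ha)
  exact eq_one_of_monotone hmono

lemma sTrans_eq_swap (hab : a ⋖ b) : sTrans n b = swap a b := by
  have hb : (a : ℕ) + 1 = b := by simpa using hab
  rw [sTrans, dif_pos (by omega)]
  congr 1
  exact Fin.ext (by simp [← hb])

lemma exists_covBy_val_eq {k : ℕ} (hk : 1 ≤ k ∧ k ≤ n - 1) : ∃ a b : Fin n, a ⋖ b ∧ b = k :=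
  ⟨⟨k - 1, by omega⟩, ⟨k, by omega⟩, by simp; omega, rfl⟩

lemma card_inversions_prod_sTrans_le (L : List ℕ) (hL : ∀ k ∈ L, 1 ≤ k ∧ k ≤ n - 1) :
    #(inversions (L.map (sTrans n)).prod) ≤ L.length := by
  induction L using List.reverseRecOn with
  | nil => simp [inversions_one]
  | append_singleton L k ih =>
    obtain ⟨a, b, hab, rfl⟩ := exists_covBy_val_eq (hL k (by simp))
    have hle := card_inversions_mul_inv_le (L.map (sTrans n)).prod (swap a b)
    rw [swap_inv, inversions_swap_of_covBy hab, card_singleton] at hle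
    have ih := ih fun k hk => hL k (by simp [hk])
    simpa [sTrans_eq_swap hab] using hle.trans (Nat.succ_le_succ ih)

lemma exists_word_length_eq_card_inversions (σ : Perm (Fin n)) :
    ∃ L : List ℕ, (∀ k ∈ L, 1 ≤ k ∧ k ≤ n - 1) ∧ L.length = #(inversions σ) ∧
      (L.map (sTrans n)).prod = σ := by
  induction h : #(inversions σ) generalizing σ with
  | zero => exact ⟨[], by simp, rfl, (eq_one_of_inversions_eq_empty (card_eq_zero.1 h)).symm⟩
  | succ d ih =>
    have hσ : σ ≠ 1 := by rintro rfl; simp [inversions_one] at h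
    obtain ⟨a, b, hab, hdesc⟩ := exists_covBy_apply_lt_of_ne_one hσ
    have hcard := card_inversions_mul_swap_add_one hab hdesc
    obtain ⟨L, hL, hlen, hprod⟩ := ih (σ * swap a b) (by omega)
    have hb : (a : ℕ) + 1 = b := by simpa using hab
    refine ⟨L ++ [(b : ℕ)], ?_, by simp [hlen], ?_⟩
    · simp only [List.mem_append, List.mem_singleton]
      rintro k (hk | rfl)
      exacts [hL k hk, by omega]
    · simp [hprod, sTrans_eq_swap hab, mul_assoc]

theorem len_eq_card_inversions (σ : Perm (Fin n)) : len n σ = #(inversions σ) := by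
  have hword := exists_word_length_eq_card_inversions σ
  refine le_antisymm (Nat.sInf_le hword) (le_csInf ⟨_, hword⟩ ?_)
  rintro _ ⟨L, hL, rfl, rfl⟩
  exact card_inversions_prod_sTrans_le L hL

theorem wle_iff_inversions_subset : wle n σ τ ↔ inversions σ ⊆ inversions τ := by
  have hτ := card_sdiff_add_card_inter (inversions τ) (inversions σ)
  have hσ := card_sdiff_add_card_inter (inversions σ) (inversions τ)
  rw [inter_comm] at hσ
  rw [wle, len_eq_card_inversions, len_eq_card_inversions, len_eq_card_inversions,
    card_inversions_mul_inv, ← sdiff_eq_empty_iff_subset, ← card_eq_zero]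
  omega

lemma wle_antisymm (h₁ : wle n σ τ) (h₂ : wle n τ σ) : σ = τ :=
  inversions_injective <|
    (wle_iff_inversions_subset.1 h₁).antisymm (wle_iff_inversions_subset.1 h₂)

end Length

section Weights

open Equiv Finset

variable {n r : ℕ} {w τ : Perm (Fin n)} {v : Fin n → ℝ}

/-- The linear form `v ↦ v_1 + ⋯ + v_k` (1-based; the 0-based coordinates below `k`). It is `1` on
`α_k` and `0` on the other simple roots, so it reads off the coefficient of `α_k` in a
combination of simple roots. -/
def prefixSum (k : Fin n) : (Fin n → ℝ) →ₗ[ℝ] ℝ := ∑ i ∈ Iio k, LinearMap.proj i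

lemma prefixSum_apply (k : Fin n) (v : Fin n → ℝ) : prefixSum k v = ∑ i ∈ Iio k, v i := by
  simp [prefixSum]

lemma stdE_apply (j : ℕ) (i : Fin n) : stdE n j i = if (i : ℕ) + 1 = j then 1 else 0 := by
  unfold stdE
  split_ifs with h h' h' <;> simp [Pi.single_apply, Fin.ext_iff] <;> omega

lemma sroot_eq_single_sub_single {a b : Fin n} (hab : a ⋖ b) :
    sroot n b = Pi.single a 1 - Pi.single b 1 := by
  have hb : (a : ℕ) + 1 = b := by simpa using hab
  ext i
  simp [sroot, stdE_apply, Pi.single_apply, Fin.ext_iff, ← hb]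

lemma prefixSum_single (k a : Fin n) : prefixSum k (Pi.single a 1) = if a < k then 1 else 0 := by
  simp [prefixSum_apply, Pi.single_apply]

lemma prefixSum_sroot (k : Fin n) {i : ℕ} (hi : 1 ≤ i ∧ i ≤ n - 1) :
    prefixSum k (sroot n i) = if i = k then 1 else 0 := by
  obtain ⟨a, b, hab, rfl⟩ := exists_covBy_val_eq hi
  have hb : (a : ℕ) + 1 = b := by simpa using hab
  simp only [sroot_eq_single_sub_single hab, map_sub, prefixSum_single, Fin.lt_def]
  split_ifs <;> first | omega | norm_num

lemma prefixSum_sum_smul_sroot (k : Fin n) (c : ℕ → ℝ) :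
    prefixSum k (∑ i ∈ Icc 1 (n - 1), c i • sroot n i) = if (k : ℕ) = 0 then 0 else c k := by
  have hterm : ∀ i ∈ Icc 1 (n - 1),
      prefixSum k (c i • sroot n i) = if i = k then c i else 0 := fun i hi => by
    simp [prefixSum_sroot k (mem_Icc.1 hi)]
  rw [map_sum, sum_congr rfl hterm, sum_ite_eq']
  simp only [mem_Icc]
  split_ifs <;> first | rfl | omega

lemma IsNonnegComb.prefixSum_nonneg (hv : IsNonnegComb n v) (k : Fin n) : 0 ≤ prefixSum k v := by
  obtain ⟨c, hc, rfl⟩ := hv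
  rw [prefixSum_sum_smul_sroot]
  split_ifs
  exacts [le_rfl, hc k]

lemma prefixSum_nonpos_of_vle_zero (hv : vle n v 0) (k : Fin n) : prefixSum k v ≤ 0 := by
  simpa using IsNonnegComb.prefixSum_nonneg hv k

lemma permAct_single (w : Perm (Fin n)) (a : Fin n) (x : ℝ) :
    permAct n w (Pi.single a x) = Pi.single (w a) x := by
  ext i
  simp [permAct, Pi.single_apply, symm_apply_eq]

lemma permAct_sub (w : Perm (Fin n)) (u v : Fin n → ℝ) :
    permAct n w (u - v) = permAct n w u - permAct n w v := rfl

lemma apply_le_apply_of_mem_WIr (hw : w ∈ WIr n r) {a b : Fin n} (hab : a ⋖ b) (hb : (b : ℕ) ≠ r) :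
    w a ≤ w b := by
  have hval : (a : ℕ) + 1 = b := by simpa using hab
  have hnonneg := (hw b (by omega) (by omega) hb).1.prefixSum_nonneg (w a)
  rw [sroot_eq_single_sub_single hab, permAct_sub, permAct_single, permAct_single, map_sub,
    prefixSum_single, prefixSum_single, if_neg (lt_irrefl _)] at hnonneg
  by_contra! hlt
  norm_num [hlt] at hnonneg

/-- The positions `1, …, r` (0-based: those below `r`). The elements of `W^{I_r}` are increasing on
this block and on its complement. -/
def firstBlock (n r : ℕ) : Finset (Fin n) := {i | (i : ℕ) < r}

lemma mem_firstBlock {i : Fin n} : i ∈ firstBlock n r ↔ (i : ℕ) < r := by simp [firstBlock]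

lemma isLowerSet_firstBlock (n r : ℕ) : IsLowerSet (firstBlock n r : Set (Fin n)) :=
  fun _ _ hle hi => mem_firstBlock.2 (lt_of_le_of_lt hle (mem_firstBlock.1 hi))

lemma monotoneOn_firstBlock (hw : w ∈ WIr n r) : MonotoneOn w (firstBlock n r) :=
  monotoneOn_of_le_succ (isLowerSet_firstBlock n r).ordConnected fun _ ha _ hb =>
    apply_le_apply_of_mem_WIr hw (Order.covBy_succ_of_not_isMax ha) (mem_firstBlock.1 hb).ne

lemma monotoneOn_compl_firstBlock (hw : w ∈ WIr n r) : MonotoneOn w ↑(firstBlock n r)ᶜ := by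
  rw [coe_compl]
  refine monotoneOn_of_le_succ (isLowerSet_firstBlock n r).compl.ordConnected fun a ha has _ => ?_
  have hcov := Order.covBy_succ_of_not_isMax ha
  have hval : (a : ℕ) + 1 = Order.succ a := by simpa using hcov
  have har : r ≤ a := by simpa [mem_firstBlock] using has
  exact apply_le_apply_of_mem_WIr hw hcov (by omega)

lemma fundWeight_apply (i : Fin n) :
    fundWeight n r i = (if i ∈ firstBlock n r then 1 else 0) - (r : ℝ) / n := by
  simp [fundWeight, stdE_apply, mem_firstBlock]

lemma prefixSum_permAct (k : Fin n) (w : Perm (Fin n)) (v : Fin n → ℝ) :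
    prefixSum k (permAct n w v) = ∑ i with w i < k, v i := by
  rw [prefixSum_apply]
  exact (sum_equiv w (by simp) (by simp [permAct])).symm

lemma prefixSum_permAct_fundWeight (k : Fin n) (w : Perm (Fin n)) :
    prefixSum k (permAct n w (fundWeight n r)) =
      #{i ∈ firstBlock n r | w i < k} - (k : ℝ) * (r / n) := by
  have hcard : #{i | w i < k} = (k : ℕ) := by
    rw [← Fin.card_Iio k]
    exact card_equiv w (by simp)
  simp only [prefixSum_permAct, fundWeight_apply, sum_sub_distrib, sum_boole, sum_const, hcard,
    nsmul_eq_mul, filter_filter]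
  congr 3
  ext i
  simp [and_comm]

lemma card_filter_firstBlock_le {k : Fin n} (h : prefixSum k (permAct n w (fundWeight n r)) <
    prefixSum k (permAct n τ (fundWeight n r)) + 1) :
    #{i ∈ firstBlock n r | w i < k} ≤ #{i ∈ firstBlock n r | τ i < k} := by
  rw [prefixSum_permAct_fundWeight, prefixSum_permAct_fundWeight, sub_add_eq_add_sub,
    sub_lt_sub_iff_right] at h
  exact Nat.lt_succ_iff.1 (by exact_mod_cast h)

theorem wle_of_prefixSum_lt (hτ : τ ∈ WIr n r) (hw : w ∈ WIr n r)
    (h : ∀ k, prefixSum k (permAct n w (fundWeight n r)) <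
      prefixSum k (permAct n τ (fundWeight n r)) + 1) : wle n τ w :=
  wle_iff_inversions_subset.2 <| inversions_subset_of_card_filter_lt_le
    (isLowerSet_firstBlock n r) (monotoneOn_firstBlock hτ) (monotoneOn_compl_firstBlock hτ)
    (monotoneOn_firstBlock hw) (monotoneOn_compl_firstBlock hw)
    fun k => card_filter_firstBlock_le (h k)

end Weights

theorem stmt13_general (n r : ℕ) (c : ℕ → ℝ) (hc : ∀ i, c i ∈ Set.Ioc (-1) 0)
    (τ : Equiv.Perm (Fin n)) (hτI : τ ∈ WIr n r)
    (hτω : permAct n τ (fundWeight n r) = ∑ i ∈ Finset.Icc 1 (n - 1), c i • sroot n i) :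
    vle n (permAct n τ (fundWeight n r)) 0 ∧
      (∀ w ∈ WIr n r, vle n (permAct n w (fundWeight n r)) 0 → wle n τ w) ∧
      (∀ w ∈ WIr n r, vle n (permAct n w (fundWeight n r)) 0 →
        (∀ w' ∈ WIr n r, vle n (permAct n w' (fundWeight n r)) 0 → wle n w w') →
        w = τ) := by
  have hτ_nonpos : vle n (permAct n τ (fundWeight n r)) 0 :=
    ⟨fun i => -c i, fun i => neg_nonneg.2 (hc i).2, by simp [hτω]⟩
  have hτ_gt (k : Fin n) : -1 < prefixSum k (permAct n τ (fundWeight n r)) := by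
    rw [hτω, prefixSum_sum_smul_sroot]
    split_ifs
    exacts [neg_one_lt_zero, (hc k).1]
  have hτ_le : ∀ w ∈ WIr n r, vle n (permAct n w (fundWeight n r)) 0 → wle n τ w := by
    refine fun w hw hw_nonpos => wle_of_prefixSum_lt hτI hw fun k => ?_
    linarith [hτ_gt k, prefixSum_nonpos_of_vle_zero hw_nonpos k]
  exact ⟨hτ_nonpos, hτ_le, fun w hw hw_nonpos hw_le =>
    wle_antisymm (hw_le τ hτI hτ_nonpos) (hτ_le w hw hw_nonpos)⟩

/-- Let `2 ≤ r ≤ n−2` and `τ_r` the unique element of `W^{I_r}` with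
`τ_r(ω_r) = ∑ (m i − ⌈m i⌉) • α i`.  Then `τ_r(ω_r) ≤ 0`, and `τ_r ≤ w` for every
`w ∈ W^{I_r}` with `w(ω_r) ≤ 0`; that is, `τ_r` is the unique minimal element of
`{w ∈ W^{I_r} : w(ω_r) ≤ 0}`. -/
theorem stmt13 (n r : ℕ) (hn : 4 ≤ n) (hr2 : 2 ≤ r) (hrn : r ≤ n - 2)
    (m : ℕ → ℚ)
    (hm : ∀ i, m i = if i ≤ r then ((i : ℚ) * ((n : ℚ) - (r : ℚ))) / (n : ℚ)
      else ((r : ℚ) * ((n : ℚ) - (i : ℚ))) / (n : ℚ))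
    (hωdecomp : fundWeight n r = ∑ i ∈ Finset.Icc 1 (n - 1), ((m i : ℝ)) • sroot n i)
    (τr : Equiv.Perm (Fin n)) (hτI : τr ∈ WIr n r)
    (hτω : permAct n τr (fundWeight n r) =
      ∑ i ∈ Finset.Icc 1 (n - 1), ((m i : ℝ) - ((⌈m i⌉ : ℤ) : ℝ)) • sroot n i) :
    vle n (permAct n τr (fundWeight n r)) 0 ∧
      (∀ w ∈ WIr n r, vle n (permAct n w (fundWeight n r)) 0 → wle n τr w) ∧
      (∀ w ∈ WIr n r, vle n (permAct n w (fundWeight n r)) 0 →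
        (∀ w' ∈ WIr n r, vle n (permAct n w' (fundWeight n r)) 0 → wle n w w') →
        w = τr) := by
  refine stmt13_general n r _ (fun i => ⟨?_, ?_⟩) τr hτI hτω
  · exact_mod_cast (by linarith [Int.ceil_lt_add_one (m i)] : (-1 : ℚ) < m i - ⌈m i⌉)
  · exact_mod_cast sub_nonpos.2 (Int.le_ceil (m i))

end SnPaper
end

section
/- Let χ = Σ_{i=1}^n m_i α_i, where the m_i are positive integers with m_1 < m_2 < ⋯ < m_n, and assume χ is regular dominant, i.e. the coordinates of χ = (χ_1, …, χ_{n+1}) ∈ ℝ^{n+1} satisfy χ_1 > χ_2 > ⋯ > χ_{n+1}. Then for w ∈ W = S_{n+1}: w(χ) ≤ 0 if and only if w = s_1·s_2⋯s_n·τ for some τ ∈ W_I. -/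
namespace SnPaper

/-!
The `i`-th fundamental coweight `v ↦ v_1 + ⋯ + v_i` is dual to the simple roots, so `v ≤ 0` holds
exactly when the coordinates of `v` sum to zero and all their partial sums are `≤ 0`. The increasing
coefficients make every coordinate of `χ` positive except the last one. For `v = w(χ)` the first
partial sum `v_1` is `≤ 0` only if `v_1` is this exceptional coordinate, i.e. `w(n+1) = 1`;
conversely, if `v_1` is exceptional then each partial sum is minus a sum of positive coordinates.
Finally, `s_1 ⋯ s_n` maps `n+1` to `1` and `W_I` is the stabilizer of `n+1`, so the `w` with
`w(n+1) = 1` form the coset `s_1 ⋯ s_n W_I`.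
-/

section Coweight

variable {N : ℕ}

/-- The fundamental coweight `v ↦ v_1 + ⋯ + v_i`, the linear form dual to the simple root `α_i`.
Every `i : ℕ` is allowed: the form is `0` for `i = 0` and the sum of all coordinates for `N ≤ i`. -/
noncomputable def coweight (N i : ℕ) : (Fin N → ℝ) →ₗ[ℝ] ℝ :=
  ∑ k : Fin N with k.val < i, LinearMap.proj k

lemma coweight_apply (i : ℕ) (v : Fin N → ℝ) :
    coweight N i v = ∑ k : Fin N with k.val < i, v k := by
  simp only [coweight, LinearMap.sum_apply, LinearMap.proj_apply]

lemma coweight_zero (v : Fin N → ℝ) : coweight N 0 v = 0 := by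
  simp [coweight_apply]

lemma coweight_of_le {i : ℕ} (hi : N ≤ i) (v : Fin N → ℝ) : coweight N i v = ∑ k, v k := by
  rw [coweight_apply, Finset.filter_true_of_mem fun k _ ↦ k.isLt.trans_le hi]

lemma coweight_succ (k : Fin N) (v : Fin N → ℝ) :
    coweight N (k + 1) v = coweight N k v + v k := by
  have hfilter : ({l | l.val < k.val + 1} : Finset (Fin N)) =
      insert k ({l | l.val < k.val} : Finset (Fin N)) := by
    ext l
    simp only [Finset.mem_filter_univ, Finset.mem_insert, Fin.ext_iff]
    omega
  rw [coweight_apply, coweight_apply, hfilter, Finset.sum_insert (by simp), add_comm]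

lemma ext_coweight {v v' : Fin N → ℝ} (h : ∀ i, coweight N i v = coweight N i v') : v = v' := by
  ext k
  have hk := h (k + 1)
  rwa [coweight_succ, coweight_succ, h k, add_right_inj] at hk

lemma coweight_stdE (i : ℕ) {j : ℕ} (hj : 1 ≤ j) (hjN : j ≤ N) :
    coweight N i (stdE N j) = if j ≤ i then 1 else 0 := by
  have hlt : j - 1 < i ↔ j ≤ i := by omega
  rw [stdE, dif_pos ⟨hj, hjN⟩, coweight_apply]
  simp only [Pi.single_apply, Finset.sum_ite_eq', Finset.mem_filter_univ, hlt]

lemma coweight_sroot (i : ℕ) {j : ℕ} (hj : 1 ≤ j) (hjN : j < N) :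
    coweight N i (sroot N j) = if i = j then 1 else 0 := by
  rw [sroot, map_sub, coweight_stdE i hj hjN.le, coweight_stdE i (Nat.le_add_left 1 j) hjN]
  split_ifs <;> first | omega | norm_num

lemma coweight_sum_smul_sroot (i : ℕ) (c : ℕ → ℝ) :
    coweight N i (∑ j ∈ Finset.Icc 1 (N - 1), c j • sroot N j) =
      if i ∈ Finset.Icc 1 (N - 1) then c i else 0 := by
  rw [map_sum, ← Finset.sum_ite_eq]
  refine Finset.sum_congr rfl fun j hj ↦ ?_
  obtain ⟨hj1, hjN⟩ := Finset.mem_Icc.mp hj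
  rw [map_smul, coweight_sroot i hj1 (by omega), smul_eq_mul, mul_ite, mul_one, mul_zero]

lemma sum_coord_sum_smul_sroot (c : ℕ → ℝ) :
    ∑ k, (∑ j ∈ Finset.Icc 1 (N - 1), c j • sroot N j) k = 0 := by
  rw [← coweight_of_le le_rfl, coweight_sum_smul_sroot, if_neg]
  simp only [Finset.mem_Icc]
  omega

theorem isNonnegComb_iff (v : Fin N → ℝ) :
    IsNonnegComb N v ↔ ∑ k, v k = 0 ∧ ∀ i, 0 ≤ coweight N i v := by
  constructor
  · rintro ⟨c, hc, rfl⟩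
    refine ⟨sum_coord_sum_smul_sroot c, fun i ↦ ?_⟩
    rw [coweight_sum_smul_sroot]
    split_ifs
    exacts [hc i, le_rfl]
  · rintro ⟨hsum, hnonneg⟩
    refine ⟨fun i ↦ coweight N i v, hnonneg, ext_coweight fun i ↦ ?_⟩
    rw [coweight_sum_smul_sroot]
    split_ifs with hi
    · rfl
    · obtain rfl | hN : i = 0 ∨ N ≤ i := by
        rw [Finset.mem_Icc] at hi
        omega
      · exact coweight_zero v
      · rw [coweight_of_le hN, hsum]

lemma vle_zero_iff {v : Fin N → ℝ} (hsum : ∑ k, v k = 0) :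
    vle N v 0 ↔ ∀ i, coweight N i v ≤ 0 := by
  simp only [vle, zero_sub, isNonnegComb_iff, Pi.neg_apply, Finset.sum_neg_distrib, hsum, neg_zero,
    true_and, map_neg, Left.nonneg_neg_iff]

end Coweight

section OneNonpositiveCoordinate

variable {n : ℕ}

lemma coweight_nonpos {v : Fin (n + 1) → ℝ} (hsum : ∑ k, v k = 0) (hpos : ∀ k ≠ 0, 0 < v k)
    (i : ℕ) : coweight (n + 1) i v ≤ 0 := by
  obtain rfl | hi := Nat.eq_zero_or_pos i
  · exact (coweight_zero v).le
  · have htail : 0 ≤ ∑ k : Fin (n + 1) with ¬ k.val < i, v k := by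
      refine Finset.sum_nonneg fun k hk ↦ (hpos k ?_).le
      rintro rfl
      exact (Finset.mem_filter_univ _).mp hk hi
    have hsplit := Finset.sum_filter_add_sum_filter_not Finset.univ
      (fun k : Fin (n + 1) ↦ k.val < i) v
    rw [coweight_apply]
    linarith

theorem vle_zero_iff_eq_zero {v : Fin (n + 1) → ℝ} {l : Fin (n + 1)} (hsum : ∑ k, v k = 0)
    (hpos : ∀ k ≠ l, 0 < v k) : vle (n + 1) v 0 ↔ l = 0 := by
  rw [vle_zero_iff hsum]
  constructor
  · intro h
    by_contra hl
    have hfirst : coweight (n + 1) 1 v = v 0 := by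
      simpa only [Fin.val_zero, coweight_zero, zero_add] using coweight_succ 0 v
    exact (hpos 0 (Ne.symm hl)).not_ge (hfirst ▸ h 1)
  · rintro rfl
    exact coweight_nonpos hsum hpos

theorem vle_permAct_zero_iff {χ : Fin (n + 1) → ℝ} {l : Fin (n + 1)} (hsum : ∑ k, χ k = 0)
    (hpos : ∀ k ≠ l, 0 < χ k) (w : Equiv.Perm (Fin (n + 1))) :
    vle (n + 1) (permAct (n + 1) w χ) 0 ↔ w l = 0 := by
  refine vle_zero_iff_eq_zero ((Equiv.sum_comp w.symm χ).trans hsum) fun k hk ↦ hpos _ ?_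
  rwa [Ne, Equiv.symm_apply_eq]

lemma sum_smul_sroot_apply_pos {m : ℕ → ℝ} (hmpos : ∀ i, 1 ≤ i → i ≤ n → 0 < m i)
    (hminc : ∀ i, 1 ≤ i → i < n → m i < m (i + 1)) {k : Fin (n + 1)} (hk : k ≠ Fin.last n) :
    0 < (∑ i ∈ Finset.Icc 1 n, m i • sroot (n + 1) i) k := by
  have hkn : k.val < n := Fin.val_lt_last hk
  have hsucc := coweight_succ k (∑ i ∈ Finset.Icc 1 (n + 1 - 1), m i • sroot (n + 1) i)
  rw [coweight_sum_smul_sroot, coweight_sum_smul_sroot,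
    if_pos (Finset.mem_Icc.mpr ⟨by omega, by omega⟩), Nat.add_sub_cancel] at hsucc
  split_ifs at hsucc with hk1
  · linarith [hminc k (Finset.mem_Icc.mp hk1).1 hkn]
  · linarith [hmpos (k + 1) (by omega) hkn]

end OneNonpositiveCoordinate

section ParabolicSubgroup

variable {N k : ℕ}

/-- The standard parabolic subgroup of `S_N` generated by `s_1, …, s_k`; the group `W_I` of the
theorem is `parabolicSubgroup (n + 1) (n - 1)`. -/
def parabolicSubgroup (N k : ℕ) : Subgroup (Equiv.Perm (Fin N)) :=
  Subgroup.closure {g | ∃ i, 1 ≤ i ∧ i ≤ k ∧ g = sTrans N i}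

/-- The Coxeter element `s_1 · s_2 ⋯ s_k` of `parabolicSubgroup N k`, with factors in increasing
order (unlike `block`). -/
def coxeterElement (N k : ℕ) : Equiv.Perm (Fin N) :=
  ((List.range' 1 k).map (sTrans N)).prod

lemma sTrans_succ {i : ℕ} (hi : i + 1 < N) :
    sTrans N (i + 1) = Equiv.swap ⟨i, by omega⟩ ⟨i + 1, hi⟩ :=
  dif_pos ⟨Nat.le_add_left 1 i, hi⟩

lemma coxeterElement_apply (hk : k < N) :
    coxeterElement N k ⟨k, hk⟩ = ⟨0, by omega⟩ := by
  induction k with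
  | zero => rfl
  | succ k ih =>
    have hmul : coxeterElement N (k + 1) = coxeterElement N k * sTrans N (k + 1) := by
      simp only [coxeterElement, List.range'_1_concat, List.map_append, List.map_singleton,
        List.prod_append, List.prod_singleton, add_comm 1 k]
    rw [hmul, Equiv.Perm.mul_apply, sTrans_succ hk, Equiv.swap_apply_right, ih]

lemma coxeterElement_mem_parabolicSubgroup {j : ℕ} (hj : j ≤ k) :
    coxeterElement N j ∈ parabolicSubgroup N k := by
  refine Subgroup.list_prod_mem _ fun g hg ↦ Subgroup.subset_closure ?_
  obtain ⟨i, hi, rfl⟩ := List.mem_map.mp hg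
  rw [List.mem_range'_1] at hi
  exact ⟨i, hi.1, by omega, rfl⟩

lemma mem_orbit_parabolicSubgroup {x y : Fin N} (hx : x ≤ k) (hy : y ≤ k) :
    y ∈ MulAction.orbit (parabolicSubgroup N k) x := by
  refine ⟨⟨(coxeterElement N y)⁻¹ * coxeterElement N x,
    mul_mem (inv_mem (coxeterElement_mem_parabolicSubgroup hy))
      (coxeterElement_mem_parabolicSubgroup hx)⟩, ?_⟩
  change (coxeterElement N y)⁻¹ (coxeterElement N x x) = y
  rw [Equiv.Perm.inv_eq_iff_eq, coxeterElement_apply x.isLt, coxeterElement_apply y.isLt]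

theorem mem_parabolicSubgroup_iff (hk : k < N) (σ : Equiv.Perm (Fin N)) :
    σ ∈ parabolicSubgroup N k ↔ ∀ x : Fin N, k < x → σ x = x := by
  constructor
  · intro hσ x hx
    suffices parabolicSubgroup N k ≤ MulAction.stabilizer _ x from this hσ
    rw [parabolicSubgroup, Subgroup.closure_le]
    rintro _ ⟨i, hi, hik, rfl⟩
    obtain ⟨j, rfl⟩ := Nat.exists_eq_add_of_le' hi
    rw [sTrans_succ (by omega)]
    exact Equiv.swap_apply_of_ne_of_ne (Fin.ne_of_val_ne (by dsimp only; omega))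
      (Fin.ne_of_val_ne (by dsimp only; omega))
  · intro hσ
    have hswap : ∀ g ∈ {g | ∃ i, 1 ≤ i ∧ i ≤ k ∧ g = sTrans N i}, g.IsSwap := by
      rintro _ ⟨i, hi, hik, rfl⟩
      obtain ⟨j, rfl⟩ := Nat.exists_eq_add_of_le' hi
      exact ⟨_, _, Fin.ne_of_val_ne j.lt_succ_self.ne, sTrans_succ (by omega)⟩
    refine (mem_closure_isSwap hswap).mpr ⟨Set.toFinite _, fun x ↦ ?_⟩
    obtain hx | hx := lt_or_ge k x.val
    · rw [hσ x hx]
      exact MulAction.mem_orbit_self x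
    · refine mem_orbit_parabolicSubgroup hx (le_of_not_gt fun hσx ↦ ?_)
      rw [σ.injective (hσ _ hσx)] at hσx
      omega

end ParabolicSubgroup

lemma mem_parabolicSubgroup_pred_iff {n : ℕ} (σ : Equiv.Perm (Fin (n + 1))) :
    σ ∈ parabolicSubgroup (n + 1) (n - 1) ↔ σ (Fin.last n) = Fin.last n := by
  rw [mem_parabolicSubgroup_iff (by omega)]
  constructor
  · intro h
    obtain rfl | hn := Nat.eq_zero_or_pos n
    · exact Fin.eq_zero _
    · exact h _ (Nat.pred_lt_of_lt hn)
  · intro h x hx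
    obtain rfl : x = Fin.last n := Fin.ext (by simp only [Fin.val_last]; omega)
    exact h

theorem exists_eq_coxeterElement_mul_iff {n : ℕ} (w : Equiv.Perm (Fin (n + 1))) :
    (∃ τ ∈ parabolicSubgroup (n + 1) (n - 1), w = coxeterElement (n + 1) n * τ) ↔
      w (Fin.last n) = 0 := by
  have hlast : coxeterElement (n + 1) n (Fin.last n) = 0 := coxeterElement_apply n.lt_succ_self
  constructor
  · rintro ⟨τ, hτ, rfl⟩
    rw [Equiv.Perm.mul_apply, (mem_parabolicSubgroup_pred_iff τ).mp hτ, hlast]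
  · intro hw
    refine ⟨(coxeterElement (n + 1) n)⁻¹ * w, ?_, (mul_inv_cancel_left _ w).symm⟩
    rw [mem_parabolicSubgroup_pred_iff, Equiv.Perm.mul_apply, hw, Equiv.Perm.inv_eq_iff_eq, hlast]

theorem stmt16_general (n : ℕ) (m : ℕ → ℝ)
    (hmpos : ∀ i, 1 ≤ i → i ≤ n → 0 < m i)
    (hminc : ∀ i, 1 ≤ i → i < n → m i < m (i + 1))
    (χ : Fin (n + 1) → ℝ)
    (hχ : χ = ∑ i ∈ Finset.Icc 1 n, m i • sroot (n + 1) i)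
    (w : Equiv.Perm (Fin (n + 1))) :
    vle (n + 1) (permAct (n + 1) w χ) 0 ↔
      ∃ τ ∈ parabolicSubgroup (n + 1) (n - 1), w = coxeterElement (n + 1) n * τ := by
  subst hχ
  rw [exists_eq_coxeterElement_mul_iff]
  exact vle_permAct_zero_iff (sum_coord_sum_smul_sroot m)
    (fun _ ↦ sum_smul_sroot_apply_pos hmpos hminc) w

/-- In `W = S_{n+1}` acting on `ℝ^{n+1}`: let
`χ = ∑_{i=1}^n m i • α i` with positive integers `m 1 < m 2 < ⋯ < m n`, regular dominant
(strictly decreasing coordinates).  Then for `w ∈ W`: `w(χ) ≤ 0` if and only if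
`w = s_1 · s_2 ⋯ s_n · τ` for some `τ ∈ W_I`, where `W_I` is the subgroup generated by
`s_1, …, s_{n−1}`. -/
theorem stmt16 (n : ℕ) (hn : 2 ≤ n) (m : ℕ → ℤ)
    (hmpos : ∀ i, 1 ≤ i → i ≤ n → 0 < m i)
    (hminc : ∀ i, 1 ≤ i → i < n → m i < m (i + 1))
    (χ : Fin (n + 1) → ℝ)
    (hχ : χ = ∑ i ∈ Finset.Icc 1 n, (m i : ℝ) • sroot (n + 1) i)
    (hreg : ∀ i j : Fin (n + 1), i < j → χ j < χ i)
    (w : Equiv.Perm (Fin (n + 1))) :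
    vle (n + 1) (permAct (n + 1) w χ) 0 ↔
      ∃ τ ∈ Subgroup.closure {g : Equiv.Perm (Fin (n + 1)) |
          ∃ i, 1 ≤ i ∧ i ≤ n - 1 ∧ g = sTrans (n + 1) i},
        w = ((List.range' 1 n).map (sTrans (n + 1))).prod * τ :=
  stmt16_general n (fun i ↦ m i) (fun i hi hin ↦ Int.cast_pos.mpr (hmpos i hi hin))
    (fun i hi hin ↦ Int.cast_lt.mpr (hminc i hi hin)) χ hχ w

end SnPaper
end
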